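/- arXiv:2211.16561 — 3 statements merged into one kernel-verified Lean document; each statement's English description precedes it below -/
import Mathlib

section
/- For every even positive integer n and prime power q, there exists a tight irreducible affine vector space partition of AG(n-1, q) consisting of q^{n/2} pairwise disjoint affine subspaces each of affine dimension n/2 - 1 (projective dimension n/2); it is obtained from an (n/2)-spread of PG(n-1,q) by removing one spread element and choosing a hyperplane through it as the hyperplane at infinity. -/
open scoped Pointwise

/-- An affine vector space partition of `F^m`: a set of proper, nonempty affine
subspaces such that every point lies in exactly one element. -/
def IsAVSP {F : Type*} [Field F] {m : ℕ}
    (A : Set (AffineSubspace F (Fin m → F))) : Prop :=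
  (∀ s ∈ A, s ≠ ⊤) ∧ (∀ s ∈ A, (s : Set (Fin m → F)).Nonempty) ∧
    ∀ x : Fin m → F, ∃! s, s ∈ A ∧ x ∈ s

/-- Tightness: no nonzero translation fixes every element. -/
def IsTight {F : Type*} [Field F] {m : ℕ}
    (A : Set (AffineSubspace F (Fin m → F))) : Prop :=
  ∀ x : Fin m → F, x ≠ 0 →
    ∃ s ∈ A, x +ᵥ (s : Set (Fin m → F)) ≠ (s : Set (Fin m → F))

/-- Reducibility: some subfamily of size `> 1` partitions the points of a proper
affine subspace. -/
def IsReducible {F : Type*} [Field F] {m : ℕ}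
    (A : Set (AffineSubspace F (Fin m → F))) : Prop :=
  ∃ U : AffineSubspace F (Fin m → F), U ≠ ⊤ ∧
    ∃ S ⊆ A, 1 < S.ncard ∧ (∀ s ∈ S, s ≤ U) ∧
      ∀ x ∈ U, ∃! s, s ∈ S ∧ x ∈ s

/-!
Choose a linear form `f` on the ambient space `V` whose kernel is the hyperplane at infinity, so
that affine space is `{v | f v = 1}`. A spread element `S` other than the removed `S₀ ≤ ker f` is
complementary to `S₀`, hence meets `{v | f v = 1}`; these traces partition it because the vectors of
`S₀` lie at infinity.

* Tightness: let the translation by `x ≠ 0` fix all traces, so that `x` lies in every `S ≠ S₀`. For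
  `0 ≠ v ∈ S₀`, the spread element through `v + x` then contains both `v` and `x`, so it is `S₀` and
  meets the other elements in `x`.
* Irreducibility: two spread elements span `V`, so two traces affinely span affine space.

The spread itself is the Desarguesian one, formed by the `K`-lines of a `K`-plane, where `K / F` has
degree `n / 2`.
-/

open Module
open scoped LinearAlgebra.Projectivization

section Spread

variable {F V : Type*} [Field F] [AddCommGroup V] [Module F V]

/-- A spread of `V` by nonzero, pairwise complementary subspaces. In dimension `n` over a finite
field, having at least two elements, these are exactly the `n / 2`-spreads. -/
structure IsSpread (𝒮 : Set (Submodule F V)) : Prop where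
  ne_bot : ∀ S ∈ 𝒮, S ≠ ⊥
  exists_mem : ∀ v : V, ∃ S ∈ 𝒮, v ∈ S
  pairwise_isCompl : 𝒮.Pairwise IsCompl

theorem IsSpread.eq_of_mem {𝒮 : Set (Submodule F V)} (h𝒮 : IsSpread 𝒮) {S T : Submodule F V}
    (hS : S ∈ 𝒮) (hT : T ∈ 𝒮) {v : V} (hv : v ≠ 0) (hvS : v ∈ S) (hvT : v ∈ T) : S = T := by
  by_contra hST
  exact hv (Submodule.disjoint_def.1 (h𝒮.pairwise_isCompl hS hT hST).disjoint v hvS hvT)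

theorem IsSpread.exists_ne {𝒮 : Set (Submodule F V)} (h𝒮 : IsSpread 𝒮) {S : Submodule F V}
    (hS : S ≠ ⊤) : ∃ T ∈ 𝒮, T ≠ S := by
  obtain ⟨v, hv⟩ := SetLike.exists_not_mem_of_ne_top S hS
  obtain ⟨T, hT, hvT⟩ := h𝒮.exists_mem v
  exact ⟨T, hT, fun hTS => hv (hTS ▸ hvT)⟩

theorem IsSpread.eq_zero_of_forall_ne_mem {𝒮 : Set (Submodule F V)} (h𝒮 : IsSpread 𝒮)
    {S₀ : Submodule F V} (h₀ : S₀ ∈ 𝒮) (htop : S₀ ≠ ⊤) {x : V}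
    (hx : ∀ S ∈ 𝒮 \ {S₀}, x ∈ S) : x = 0 := by
  by_contra hx0
  obtain ⟨v, hv, hv0⟩ := Submodule.exists_mem_ne_zero_of_ne_bot (h𝒮.ne_bot S₀ h₀)
  obtain ⟨R, hR, hvxR⟩ := h𝒮.exists_mem (v + x)
  obtain rfl | hne := eq_or_ne R S₀
  · obtain ⟨T, hT, hTR⟩ := h𝒮.exists_ne htop
    exact hTR (h𝒮.eq_of_mem hT hR hx0 (hx T ⟨hT, hTR⟩) ((R.add_mem_iff_right hv).1 hvxR))
  · exact hne (h𝒮.eq_of_mem hR h₀ hv0 ((R.add_mem_iff_left (hx R ⟨hR, hne⟩)).1 hvxR) hv)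

theorem exists_mem_apply_eq_one_of_codisjoint {S T : Submodule F V} (hST : Codisjoint S T)
    {f : V →ₗ[F] F} (hf : f ≠ 0) (hT : T ≤ LinearMap.ker f) : ∃ v ∈ S, f v = 1 := by
  obtain ⟨u, hu⟩ := LinearMap.surjective hf 1
  obtain ⟨s, hs, t, ht, rfl⟩ := Submodule.mem_sup.1 (hST.eq_top ▸ Submodule.mem_top : u ∈ S ⊔ T)
  refine ⟨s, hs, ?_⟩
  rwa [map_add, LinearMap.mem_ker.1 (hT ht), add_zero] at hu

theorem finrank_inf_ker_add_one {S : Submodule F V} [FiniteDimensional F S] {f : V →ₗ[F] F}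
    (hS : ∃ v ∈ S, f v ≠ 0) :
    finrank F (S ⊓ LinearMap.ker f : Submodule F V) + 1 = finrank F S := by
  obtain ⟨v, hvS, hv⟩ := hS
  have hne : f.domRestrict S ≠ 0 := fun h => hv (LinearMap.congr_fun h ⟨v, hvS⟩)
  rw [← Module.Dual.finrank_ker_add_one_of_ne_zero hne, LinearMap.ker_domRestrict,
    ← Submodule.map_comap_subtype, Submodule.finrank_map_subtype_eq]

end Spread

section DesarguesianSpread

variable (F K V : Type*) [Field F] [Field K] [Algebra F K] [AddCommGroup V] [Module K V]
  [Module F V] [IsScalarTower F K V]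

/-- The Desarguesian spread of a `K`-space `V`: its `K`-lines, regarded as subspaces over the
smaller field `F`. -/
def desarguesianSpread : Set (Submodule F V) :=
  Set.range fun p : ℙ K V => p.submodule.restrictScalars F

theorem isSpread_desarguesianSpread (hV : finrank K V = 2) :
    IsSpread (desarguesianSpread F K V) where
  ne_bot := by
    rintro _ ⟨p, rfl⟩ hp
    have hfinrank := p.finrank_submodule
    rw [(Submodule.restrictScalars_eq_bot_iff F K V).1 hp, finrank_bot] at hfinrank
    exact zero_ne_one hfinrank
  exists_mem v := by
    have : Nontrivial V := Module.nontrivial_of_finrank_pos (R := K) (by omega)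
    obtain rfl | hv := eq_or_ne v 0
    · obtain ⟨u, hu⟩ := exists_ne (0 : V)
      exact ⟨_, ⟨Projectivization.mk K u hu, rfl⟩, zero_mem _⟩
    · exact ⟨_, ⟨Projectivization.mk K v hv, rfl⟩, by simp⟩
  pairwise_isCompl := by
    rintro _ ⟨p, rfl⟩ _ ⟨r, rfl⟩ hpr
    have : FiniteDimensional K V := Module.finite_of_finrank_pos (by omega)
    have hne : p.submodule ≠ r.submodule := fun h =>
      hpr (congrArg (Submodule.restrictScalars F) h)
    have hdisj : Disjoint p.submodule r.submodule :=
      (Submodule.isAtom_iff_finrank_eq_one.2 p.finrank_submodule).disjoint_of_ne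
        (Submodule.isAtom_iff_finrank_eq_one.2 r.finrank_submodule) hne
    have hcompl : IsCompl p.submodule r.submodule :=
      (Submodule.isCompl_iff_disjoint _ _
        (by rw [hV, p.finrank_submodule, r.finrank_submodule])).2 hdisj
    simpa using hcompl

theorem ncard_desarguesianSpread [Finite K] (hV : finrank K V = 2) :
    (desarguesianSpread F K V).ncard = Nat.card K + 1 := by
  have hinj : Function.Injective fun p : ℙ K V => p.submodule.restrictScalars F :=
    (Submodule.restrictScalars_injective F K V).comp Projectivization.submodule_injective
  rw [desarguesianSpread, Set.ncard_range_of_injective hinj,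
    Projectivization.card_of_finrank_two K V hV]

variable {F K V} in
theorem finrank_of_mem_desarguesianSpread {S : Submodule F V} (hS : S ∈ desarguesianSpread F K V) :
    finrank F S = finrank F K := by
  obtain ⟨p, rfl⟩ := hS
  have hfinrank := finrank_mul_finrank F K p.submodule
  rw [p.finrank_submodule, mul_one] at hfinrank
  exact hfinrank.symm

end DesarguesianSpread

theorem exists_isSpread_finrank_eq (F : Type*) [Field F] [Finite F] {k : ℕ} (hk : k ≠ 0) :
    ∃ (V : Type) (_ : AddCommGroup V) (_ : Module F V) (𝒮 : Set (Submodule F V)),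
      finrank F V = 2 * k ∧ IsSpread 𝒮 ∧ 𝒮.ncard = Nat.card F ^ k + 1 ∧
        ∀ S ∈ 𝒮, finrank F S = k := by
  obtain ⟨p, _⟩ := CharP.exists F
  have : Fact p.Prime := ⟨CharP.char_is_prime F p⟩
  have : NeZero k := ⟨hk⟩
  let K := FiniteField.Extension F p k
  have hK : finrank F K = k := FiniteField.finrank_extension F p k
  have hplane : finrank K (K × K) = 2 := by rw [finrank_prod, finrank_self]
  refine ⟨K × K, inferInstance, inferInstance, desarguesianSpread F K (K × K), ?_,
    isSpread_desarguesianSpread F K _ hplane, ?_,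
    fun S hS => (finrank_of_mem_desarguesianSpread hS).trans hK⟩
  · rw [finrank_prod, hK, two_mul]
  · rw [ncard_desarguesianSpread F K _ hplane, FiniteField.natCard_extension]

section AffineTrace

variable {F V W P : Type*} [Field F] [AddCommGroup V] [Module F V] [AddCommGroup W] [Module F W]
  [AddTorsor W P]

/-- `φ` identifies the affine space `P` with the complement of the hyperplane at infinity `ker f`
in the projective space of `V`, each point of which is represented by its unique vector `v` with
`f v = 1`. -/
structure IsAffineChart (f : V →ₗ[F] F) (φ : P →ᵃ[F] V) : Prop where
  injective : Function.Injective φ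
  mem_range_iff : ∀ v, v ∈ Set.range φ ↔ f v = 1

/-- The affine part of the projective subspace given by `S`, in the affine coordinates `φ`. -/
def affineTrace (φ : P →ᵃ[F] V) (S : Submodule F V) : AffineSubspace F P :=
  S.toAffineSubspace.comap φ

/-- The affine parts of the elements of `𝒮` other than `S₀`. -/
def affineTraces (φ : P →ᵃ[F] V) (𝒮 : Set (Submodule F V)) (S₀ : Submodule F V) :
    Set (AffineSubspace F P) :=
  affineTrace φ '' (𝒮 \ {S₀})

theorem mem_affineTrace {φ : P →ᵃ[F] V} {S : Submodule F V} {p : P} :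
    p ∈ affineTrace φ S ↔ φ p ∈ S :=
  Iff.rfl

theorem vadd_mem_affineTrace_iff {φ : P →ᵃ[F] V} {S : Submodule F V} {p : P}
    (hp : p ∈ affineTrace φ S) {w : W} : w +ᵥ p ∈ affineTrace φ S ↔ φ.linear w ∈ S := by
  rw [mem_affineTrace, AffineMap.map_vadd, vadd_eq_add]
  exact S.add_mem_iff_left hp

theorem mem_direction_affineTrace {φ : P →ᵃ[F] V} {S : Submodule F V}
    (hS : (affineTrace φ S : Set P).Nonempty) {w : W} :
    w ∈ (affineTrace φ S).direction ↔ φ.linear w ∈ S := by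
  obtain ⟨p, hp⟩ := hS
  rw [← AffineSubspace.vadd_mem_iff_mem_direction w hp, vadd_mem_affineTrace_iff hp]

theorem linear_mem_of_vadd_affineTrace_eq {φ : P →ᵃ[F] V} {S : Submodule F V}
    (hS : (affineTrace φ S : Set P).Nonempty) {w : W}
    (hw : w +ᵥ (affineTrace φ S : Set P) = affineTrace φ S) : φ.linear w ∈ S := by
  obtain ⟨p, hp⟩ := hS
  have hwp : w +ᵥ p ∈ (affineTrace φ S : Set P) := hw ▸ Set.vadd_mem_vadd_set hp
  exact (vadd_mem_affineTrace_iff hp).1 hwp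

namespace IsAffineChart

variable {f : V →ₗ[F] F} {φ : P →ᵃ[F] V}

theorem apply_eq_one (hφ : IsAffineChart f φ) (p : P) : f (φ p) = 1 :=
  (hφ.mem_range_iff _).1 ⟨p, rfl⟩

theorem exists_eq (hφ : IsAffineChart f φ) {v : V} (hv : f v = 1) : ∃ p, φ p = v :=
  (hφ.mem_range_iff v).2 hv

theorem ne_zero (hφ : IsAffineChart f φ) : f ≠ 0 := by
  rintro rfl
  obtain ⟨p⟩ : Nonempty P := inferInstance
  exact zero_ne_one (hφ.apply_eq_one p)

theorem apply_ne_zero (hφ : IsAffineChart f φ) (p : P) : φ p ≠ 0 := fun hp =>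
  zero_ne_one (α := F) (by rw [← hφ.apply_eq_one p, hp, map_zero])

theorem linear_injective (hφ : IsAffineChart f φ) : Function.Injective φ.linear :=
  φ.linear_injective_iff.2 hφ.injective

theorem range_linear (hφ : IsAffineChart f φ) : LinearMap.range φ.linear = LinearMap.ker f := by
  obtain ⟨p⟩ : Nonempty P := inferInstance
  refine le_antisymm ?_ fun v hv => ?_
  · rintro _ ⟨w, rfl⟩
    have hw := hφ.apply_eq_one (w +ᵥ p)
    rwa [AffineMap.map_vadd, vadd_eq_add, map_add, hφ.apply_eq_one, add_eq_right] at hw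
  · obtain ⟨r, hr⟩ := hφ.exists_eq (v := v + φ p)
      (by rw [map_add, LinearMap.mem_ker.1 hv, hφ.apply_eq_one, zero_add])
    exact ⟨r -ᵥ p, by rw [AffineMap.linearMap_vsub, hr, vsub_eq_sub, add_sub_cancel_right]⟩

theorem affineTrace_nonempty (hφ : IsAffineChart f φ) {S T : Submodule F V}
    (hST : Codisjoint S T) (hT : T ≤ LinearMap.ker f) : (affineTrace φ S : Set P).Nonempty := by
  obtain ⟨v, hvS, hv⟩ := exists_mem_apply_eq_one_of_codisjoint hST hφ.ne_zero hT
  obtain ⟨p, rfl⟩ := hφ.exists_eq hv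
  exact ⟨p, hvS⟩

theorem sub_smul_mem_map_direction_affineTrace (hφ : IsAffineChart f φ) {S : Submodule F V} {p : P}
    (hp : p ∈ affineTrace φ S) {v : V} (hv : v ∈ S) :
    v - f v • φ p ∈ (affineTrace φ S).direction.map φ.linear := by
  have hker : v - f v • φ p ∈ LinearMap.range φ.linear := by
    rw [hφ.range_linear, LinearMap.mem_ker, map_sub, map_smul, hφ.apply_eq_one, smul_eq_mul,
      mul_one, sub_self]
  obtain ⟨w, hw⟩ := hker
  refine ⟨w, (mem_direction_affineTrace ⟨p, hp⟩).2 ?_, hw⟩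
  exact hw ▸ S.sub_mem hv (S.smul_mem _ hp)

theorem affineTrace_sup_affineTrace_eq_top (hφ : IsAffineChart f φ) {S T : Submodule F V}
    (hST : Codisjoint S T) (hS : (affineTrace φ S : Set P).Nonempty)
    (hT : (affineTrace φ T : Set P).Nonempty) : affineTrace φ S ⊔ affineTrace φ T = ⊤ := by
  obtain ⟨p, hp⟩ := hS
  obtain ⟨r, hr⟩ := hT
  set U := affineTrace φ S ⊔ affineTrace φ T
  have hSU : affineTrace φ S ≤ U := le_sup_left
  have hTU : affineTrace φ T ≤ U := le_sup_right
  refine eq_top_iff.2 fun x _ => ?_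
  obtain ⟨s, hs, t, ht, hst⟩ :=
    Submodule.mem_sup.1 (hST.eq_top ▸ Submodule.mem_top : φ x ∈ S ⊔ T)
  obtain ⟨d, hd, hds⟩ := hφ.sub_smul_mem_map_direction_affineTrace hp hs
  obtain ⟨e, he, het⟩ := hφ.sub_smul_mem_map_direction_affineTrace hr ht
  have hsum : f s = 1 - f t := by rw [eq_sub_iff_add_eq, ← map_add, hst, hφ.apply_eq_one]
  have hx : x = (d + e) +ᵥ AffineMap.lineMap p r (f t) := by
    apply hφ.injective
    rw [AffineMap.map_vadd, AffineMap.apply_lineMap, AffineMap.lineMap_apply_module, map_add, hds,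
      het, hsum, vadd_eq_add, ← hst]
    abel
  rw [hx]
  exact U.vadd_mem_of_mem_direction
    (add_mem (AffineSubspace.direction_le hSU hd) (AffineSubspace.direction_le hTU he))
    (AffineMap.lineMap_mem _ (hSU hp) (hTU hr))

theorem finrank_direction_affineTrace_add_one (hφ : IsAffineChart f φ) {S : Submodule F V}
    [FiniteDimensional F S] (hS : (affineTrace φ S : Set P).Nonempty) :
    finrank F (affineTrace φ S).direction + 1 = finrank F S := by
  have hdir : (affineTrace φ S).direction = S.comap φ.linear :=
    Submodule.ext fun _ => mem_direction_affineTrace hS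
  have hmap : (affineTrace φ S).direction.map φ.linear = S ⊓ LinearMap.ker f := by
    rw [hdir, Submodule.map_comap_eq, hφ.range_linear, inf_comm]
  obtain ⟨p, hp⟩ := hS
  rw [(Submodule.equivMapOfInjective _ hφ.linear_injective _).finrank_eq, hmap]
  exact finrank_inf_ker_add_one ⟨φ p, hp, by simp [hφ.apply_eq_one]⟩

end IsAffineChart

theorem exists_isAffineChart [FiniteDimensional F W] {f : V →ₗ[F] F} (hf : f ≠ 0)
    (hW : finrank F W + 1 = finrank F V) : ∃ φ : W →ᵃ[F] V, IsAffineChart f φ := by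
  have : FiniteDimensional F V := finite_of_finrank_pos (by omega)
  obtain ⟨u, hu⟩ := LinearMap.surjective hf 1
  have hker := Module.Dual.finrank_ker_add_one_of_ne_zero hf
  let e : W ≃ₗ[F] LinearMap.ker f := LinearEquiv.ofFinrankEq _ _ (by omega)
  let φ : W →ᵃ[F] V :=
    ((LinearMap.ker f).subtype ∘ₗ e.toLinearMap).toAffineMap + AffineMap.const F W u
  have hφ : ∀ w, φ w = e w + u := fun _ => rfl
  refine ⟨φ, fun w w' h => ?_, fun v => ⟨?_, fun hv => ?_⟩⟩
  · rw [hφ, hφ, add_left_inj, SetLike.coe_eq_coe] at h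
    exact e.injective h
  · rintro ⟨w, rfl⟩
    rw [hφ, map_add, LinearMap.mem_ker.1 (e w).2, hu, zero_add]
  · have hvu : v - u ∈ LinearMap.ker f := by rw [LinearMap.mem_ker, map_sub, hv, hu, sub_self]
    exact ⟨e.symm ⟨v - u, hvu⟩, by rw [hφ, e.apply_symm_apply, sub_add_cancel]⟩

theorem exists_le_ker_isAffineChart [FiniteDimensional F W] {S : Submodule F V}
    (hS : S ≠ ⊤) (hW : finrank F W + 1 = finrank F V) :
    ∃ (f : V →ₗ[F] F) (φ : W →ᵃ[F] V), S ≤ LinearMap.ker f ∧ IsAffineChart f φ := by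
  obtain ⟨f, hf, hSf⟩ := S.exists_le_ker_of_lt_top hS.lt_top
  obtain ⟨φ, hφ⟩ := exists_isAffineChart hf hW
  exact ⟨f, φ, hSf, hφ⟩

end AffineTrace

namespace IsSpread

section AffineTraces

variable {F V W P : Type*} [Field F] [AddCommGroup V] [Module F V] [AddCommGroup W] [Module F W]
  [AddTorsor W P] {𝒮 : Set (Submodule F V)} {S₀ : Submodule F V} {f : V →ₗ[F] F} {φ : P →ᵃ[F] V}

theorem affineTrace_nonempty (h𝒮 : IsSpread 𝒮) (h₀ : S₀ ∈ 𝒮) (hf : S₀ ≤ LinearMap.ker f)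
    (hφ : IsAffineChart f φ) {S : Submodule F V} (hS : S ∈ 𝒮 \ {S₀}) :
    (affineTrace φ S : Set P).Nonempty :=
  hφ.affineTrace_nonempty (h𝒮.pairwise_isCompl hS.1 h₀ hS.2).codisjoint hf

theorem affineTrace_ne_top (h𝒮 : IsSpread 𝒮) (h₀ : S₀ ∈ 𝒮) (hf : S₀ ≤ LinearMap.ker f)
    (hφ : IsAffineChart f φ) {S : Submodule F V} (hS : S ∈ 𝒮 \ {S₀}) : affineTrace φ S ≠ ⊤ := by
  intro htop
  obtain ⟨p, hp⟩ := h𝒮.affineTrace_nonempty h₀ hf hφ hS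
  obtain ⟨v, hv, hv0⟩ := Submodule.exists_mem_ne_zero_of_ne_bot (h𝒮.ne_bot S₀ h₀)
  obtain ⟨w, rfl⟩ : v ∈ LinearMap.range φ.linear := hφ.range_linear ▸ hf hv
  have hwS : φ.linear w ∈ S := (vadd_mem_affineTrace_iff hp).1 (htop ▸ AffineSubspace.mem_top F W _)
  exact hS.2 (h𝒮.eq_of_mem hS.1 h₀ hv0 hwS hv)

theorem eq_of_mem_affineTrace (h𝒮 : IsSpread 𝒮) (hφ : IsAffineChart f φ) {S T : Submodule F V}
    (hS : S ∈ 𝒮) (hT : T ∈ 𝒮) {p : P} (hpS : p ∈ affineTrace φ S) (hpT : p ∈ affineTrace φ T) :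
    S = T :=
  h𝒮.eq_of_mem hS hT (hφ.apply_ne_zero p) hpS hpT

theorem existsUnique_mem_affineTraces (h𝒮 : IsSpread 𝒮) (hf : S₀ ≤ LinearMap.ker f)
    (hφ : IsAffineChart f φ) (p : P) : ∃! s, s ∈ affineTraces φ 𝒮 S₀ ∧ p ∈ s := by
  obtain ⟨S, hS, hpS⟩ := h𝒮.exists_mem (φ p)
  have hne : S ≠ S₀ := by
    rintro rfl
    exact one_ne_zero ((hφ.apply_eq_one p).symm.trans (hf hpS))
  refine ⟨affineTrace φ S, ⟨⟨S, ⟨hS, hne⟩, rfl⟩, hpS⟩, ?_⟩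
  rintro _ ⟨⟨T, hT, rfl⟩, hpT⟩
  rw [h𝒮.eq_of_mem_affineTrace hφ hT.1 hS hpT hpS]

theorem pairwise_disjoint_affineTraces (h𝒮 : IsSpread 𝒮) (hφ : IsAffineChart f φ) :
    (affineTraces φ 𝒮 S₀).Pairwise fun s t => Disjoint (s : Set P) (t : Set P) := by
  rintro _ ⟨S, hS, rfl⟩ _ ⟨T, hT, rfl⟩ hST
  refine Set.disjoint_left.2 fun p hpS hpT => hST ?_
  rw [h𝒮.eq_of_mem_affineTrace hφ hS.1 hT.1 hpS hpT]

theorem ncard_affineTraces (h𝒮 : IsSpread 𝒮) (h₀ : S₀ ∈ 𝒮) (hf : S₀ ≤ LinearMap.ker f)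
    (hφ : IsAffineChart f φ) : (affineTraces φ 𝒮 S₀).ncard = 𝒮.ncard - 1 := by
  have hinj : Set.InjOn (affineTrace φ) (𝒮 \ {S₀}) := fun S hS T hT hST => by
    obtain ⟨p, hp⟩ := h𝒮.affineTrace_nonempty h₀ hf hφ hS
    exact h𝒮.eq_of_mem_affineTrace hφ hS.1 hT.1 hp (hST ▸ hp)
  rw [affineTraces, hinj.ncard_image, Set.ncard_sdiff_singleton_of_mem h₀]

theorem sup_eq_top_of_mem_affineTraces (h𝒮 : IsSpread 𝒮) (h₀ : S₀ ∈ 𝒮)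
    (hf : S₀ ≤ LinearMap.ker f) (hφ : IsAffineChart f φ) {s t : AffineSubspace F P}
    (hs : s ∈ affineTraces φ 𝒮 S₀) (ht : t ∈ affineTraces φ 𝒮 S₀) (hst : s ≠ t) : s ⊔ t = ⊤ := by
  obtain ⟨S, hS, rfl⟩ := hs
  obtain ⟨T, hT, rfl⟩ := ht
  have hne : S ≠ T := fun h => hst (congrArg (affineTrace φ) h)
  exact hφ.affineTrace_sup_affineTrace_eq_top (h𝒮.pairwise_isCompl hS.1 hT.1 hne).codisjoint
    (h𝒮.affineTrace_nonempty h₀ hf hφ hS) (h𝒮.affineTrace_nonempty h₀ hf hφ hT)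

theorem finrank_direction_add_one_of_mem_affineTraces [FiniteDimensional F V] (h𝒮 : IsSpread 𝒮)
    (h₀ : S₀ ∈ 𝒮) (hf : S₀ ≤ LinearMap.ker f) (hφ : IsAffineChart f φ) {k : ℕ}
    (hk : ∀ S ∈ 𝒮, finrank F S = k) {s : AffineSubspace F P} (hs : s ∈ affineTraces φ 𝒮 S₀) :
    finrank F s.direction + 1 = k := by
  obtain ⟨S, hS, rfl⟩ := hs
  rw [hφ.finrank_direction_affineTrace_add_one (h𝒮.affineTrace_nonempty h₀ hf hφ hS), hk S hS.1]

end AffineTraces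

section Coordinates

variable {F V : Type*} [Field F] [AddCommGroup V] [Module F V] {𝒮 : Set (Submodule F V)}
  {S₀ : Submodule F V} {f : V →ₗ[F] F} {m : ℕ} {φ : (Fin m → F) →ᵃ[F] V}

theorem isAVSP_affineTraces (h𝒮 : IsSpread 𝒮) (h₀ : S₀ ∈ 𝒮) (hf : S₀ ≤ LinearMap.ker f)
    (hφ : IsAffineChart f φ) : IsAVSP (affineTraces φ 𝒮 S₀) := by
  refine ⟨?_, ?_, h𝒮.existsUnique_mem_affineTraces hf hφ⟩
  · rintro _ ⟨S, hS, rfl⟩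
    exact h𝒮.affineTrace_ne_top h₀ hf hφ hS
  · rintro _ ⟨S, hS, rfl⟩
    exact h𝒮.affineTrace_nonempty h₀ hf hφ hS

theorem isTight_affineTraces (h𝒮 : IsSpread 𝒮) (h₀ : S₀ ∈ 𝒮) (hf : S₀ ≤ LinearMap.ker f)
    (hφ : IsAffineChart f φ) : IsTight (affineTraces φ 𝒮 S₀) := by
  intro x hx
  by_contra! hfix
  have hmem : ∀ S ∈ 𝒮 \ {S₀}, φ.linear x ∈ S := fun S hS =>
    linear_mem_of_vadd_affineTrace_eq (h𝒮.affineTrace_nonempty h₀ hf hφ hS)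
      (hfix _ (Set.mem_image_of_mem _ hS))
  have htop : S₀ ≠ ⊤ := fun h =>
    hφ.ne_zero (LinearMap.ker_eq_top.1 (top_le_iff.1 (h ▸ hf)))
  have hzero : φ.linear x = 0 := h𝒮.eq_zero_of_forall_ne_mem h₀ htop hmem
  exact hx ((map_eq_zero_iff _ hφ.linear_injective).1 hzero)

theorem not_isReducible_affineTraces (h𝒮 : IsSpread 𝒮) (h₀ : S₀ ∈ 𝒮)
    (hf : S₀ ≤ LinearMap.ker f) (hφ : IsAffineChart f φ) :
    ¬ IsReducible (affineTraces φ 𝒮 S₀) := by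
  rintro ⟨U, hU, 𝒯, h𝒯, hcard, hle, -⟩
  obtain ⟨s, hs, t, ht, hst⟩ := (Set.one_lt_ncard_iff_nontrivial_and_finite.1 hcard).1
  have hsup := h𝒮.sup_eq_top_of_mem_affineTraces h₀ hf hφ (h𝒯 hs) (h𝒯 ht) hst
  exact hU (top_le_iff.1 (hsup ▸ sup_le (hle s hs) (hle t ht)))

end Coordinates

end IsSpread

theorem stmt14 (q n : ℕ) (F : Type*) [Field F] [Fintype F] (hq : Fintype.card F = q)
    (hn : Even n) (hn0 : 0 < n) :
    ∃ A : Set (AffineSubspace F (Fin (n - 1) → F)), IsAVSP A ∧ IsTight A ∧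
      ¬ IsReducible A ∧ A.ncard = q ^ (n / 2) ∧
      (∀ s ∈ A, Module.finrank F s.direction = n / 2 - 1) ∧
      A.Pairwise fun s t => Disjoint (s : Set (Fin (n - 1) → F)) (t : Set (Fin (n - 1) → F)) := by
  obtain ⟨k, rfl⟩ := hn.two_dvd
  rw [Nat.mul_div_cancel_left k two_pos]
  obtain ⟨V, _, _, 𝒮, hV, h𝒮, hcard, hfinrank⟩ :=
    exists_isSpread_finrank_eq F (k := k) (by omega)
  have : FiniteDimensional F V := finite_of_finrank_pos (by omega)
  obtain ⟨S₀, h₀, -⟩ := h𝒮.exists_mem 0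
  have htop : S₀ ≠ ⊤ := by
    rintro rfl
    have := finrank_top F V ▸ hfinrank ⊤ h₀
    omega
  obtain ⟨f, φ, hf, hφ⟩ := exists_le_ker_isAffineChart (W := Fin (2 * k - 1) → F) htop
    (by rw [finrank_fin_fun]; omega)
  refine ⟨affineTraces φ 𝒮 S₀, h𝒮.isAVSP_affineTraces h₀ hf hφ, h𝒮.isTight_affineTraces h₀ hf hφ,
    h𝒮.not_isReducible_affineTraces h₀ hf hφ, ?_, fun s hs => Nat.eq_sub_of_add_eq
      (h𝒮.finrank_direction_add_one_of_mem_affineTraces h₀ hf hφ hfinrank hs),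
    h𝒮.pairwise_disjoint_affineTraces hφ⟩
  rw [h𝒮.ncard_affineTraces h₀ hf hφ, hcard, Nat.card_eq_fintype_card, hq, Nat.add_sub_cancel]
end

section
/- Let A = {U_1, ..., U_r} be an irreducible tight affine vector space partition of F_2^{n-1} (n ≥ 3) in which U_1 has affine dimension n-3 (projective dimension n-2). Then there exists an irreducible tight affine vector space partition of F_2^{n+1} of size r + 3 containing an element of affine dimension n-1 (projective dimension n). -/
open scoped Pointwise

/-!
Partitions `𝒜 c` of the parallel hyperplanes `{c} × F^m` that share an element `E` can be glued: the
copies of `E` are merged into `F × E`. An affine subspace that is a union of glued elements meets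
each hyperplane in a union of elements of `𝒜 c`, so if all `𝒜 c` are irreducible each nonempty slice
is an element of `𝒜 c` or the whole hyperplane; since nonempty slices are parallel, the result is
irreducible as soon as elements other than `E` in different hyperplanes are never parallel.

Over `F_2` two partitions of `F_2 × F_2^(n-1)` are glued. One consists of the cylinders over the
given partition, which all contain the direction of the first axis. The other is the pullback of a
partition of `F_2^3` into four pairwise skew lines, along a map sending the cylinder over `U₁` to
the line parallel to that axis; its other three elements do not contain the direction of the axis.
-/

section Comap

variable {R V₁ V₂ P₁ P₂ : Type*} [Ring R] [AddCommGroup V₁] [Module R V₁] [AddTorsor V₁ P₁]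
  [AddCommGroup V₂] [Module R V₂] [AddTorsor V₂ P₂]

lemma vadd_coe_eq_iff_mem_direction {s : AffineSubspace R P₁} (hs : (s : Set P₁).Nonempty)
    (v : V₁) : v +ᵥ (s : Set P₁) = s ↔ v ∈ s.direction := by
  constructor
  · intro hv
    obtain ⟨p, hp⟩ := hs
    rw [← AffineSubspace.vadd_mem_iff_mem_direction v hp, ← SetLike.mem_coe, ← hv]
    exact Set.vadd_mem_vadd_set hp
  · intro hv
    ext x
    rw [Set.mem_vadd_set_iff_neg_vadd_mem]
    exact AffineSubspace.vadd_mem_iff_mem_of_mem_direction (neg_mem hv)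

lemma direction_comap_of_mem {f : P₁ →ᵃ[R] P₂} {s : AffineSubspace R P₂} {p : P₁} (hp : f p ∈ s) :
    (s.comap f).direction = s.direction.comap f.linear := by
  ext v
  rw [← AffineSubspace.vadd_mem_iff_mem_direction v (AffineSubspace.mem_comap.2 hp),
    AffineSubspace.mem_comap, AffineMap.map_vadd, AffineSubspace.vadd_mem_iff_mem_direction _ hp,
    Submodule.mem_comap]

lemma direction_comap_of_surjective {f : P₁ →ᵃ[R] P₂} (hf : Function.Surjective f)
    {s : AffineSubspace R P₂} (hs : (s : Set P₂).Nonempty) :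
    (s.comap f).direction = s.direction.comap f.linear := by
  obtain ⟨p, hp⟩ := hs
  obtain ⟨x, rfl⟩ := hf p
  exact direction_comap_of_mem hp

lemma comap_injective_of_surjective {f : P₁ →ᵃ[R] P₂} (hf : Function.Surjective f) :
    Function.Injective (AffineSubspace.comap f) := fun _ _ hst =>
  SetLike.coe_injective (hf.preimage_injective (congrArg SetLike.coe hst))

end Comap

section Codimension

variable {F V₁ V₂ P₁ : Type*} [Field F] [AddCommGroup V₁] [Module F V₁] [AddTorsor V₁ P₁]
  [AddCommGroup V₂] [Module F V₂]

lemma finrank_comap_add_finrank_of_surjective [FiniteDimensional F V₁] [FiniteDimensional F V₂]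
    {f : V₁ →ₗ[F] V₂} (hf : Function.Surjective f) (p : Submodule F V₂) :
    Module.finrank F (p.comap f) + Module.finrank F V₂ =
      Module.finrank F p + Module.finrank F V₁ := by
  have hsurj : Function.Surjective (p.mkQ ∘ₗ f) := (Submodule.mkQ_surjective p).comp hf
  have hrank := LinearMap.finrank_range_add_finrank_ker (p.mkQ ∘ₗ f)
  rw [LinearMap.range_eq_top.2 hsurj, finrank_top,
    LinearMap.ker_comp, Submodule.ker_mkQ] at hrank
  have hquot := Submodule.finrank_quotient_add_finrank p
  omega

lemma exists_surjective_affineMap_mem_iff_eq_zero [FiniteDimensional F V₁]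
    {s : AffineSubspace F P₁} (hs : (s : Set P₁).Nonempty) {d : ℕ}
    (hd : Module.finrank F s.direction + d = Module.finrank F V₁) :
    ∃ q : P₁ →ᵃ[F] (Fin d → F), Function.Surjective q ∧ ∀ x, x ∈ s ↔ q x = 0 := by
  obtain ⟨p, hp⟩ := hs
  have hquot := Submodule.finrank_quotient_add_finrank s.direction
  let e : (V₁ ⧸ s.direction) ≃ₗ[F] (Fin d → F) :=
    LinearEquiv.ofFinrankEq _ _ (by rw [Module.finrank_fin_fun]; omega)
  let q : P₁ →ᵃ[F] (Fin d → F) :=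
    (e.toLinearMap ∘ₗ s.direction.mkQ).toAffineMap.comp (AffineEquiv.vaddConst F p).symm
  refine ⟨q, ?_, fun x => ?_⟩
  · exact (e.surjective.comp (Submodule.mkQ_surjective _)).comp (AffineEquiv.surjective _)
  · rw [← AffineSubspace.vsub_right_mem_direction_iff_mem hp]
    simp [q]

end Codimension

section Partition

variable {F : Type*} [Field F] {m k : ℕ} {A : Set (AffineSubspace F (Fin m → F))}

lemma IsAVSP.eq_of_mem (hA : IsAVSP A) {s t : AffineSubspace F (Fin m → F)} (hs : s ∈ A)
    (ht : t ∈ A) {x : Fin m → F} (hxs : x ∈ s) (hxt : x ∈ t) : s = t :=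
  (hA.2.2 x).unique ⟨hs, hxs⟩ ⟨ht, hxt⟩

lemma IsAVSP.eq_of_le (hA : IsAVSP A) {s t : AffineSubspace F (Fin m → F)} (hs : s ∈ A)
    (ht : t ∈ A) (hst : s ≤ t) : s = t := by
  obtain ⟨x, hx⟩ := hA.2.1 s hs
  exact hA.eq_of_mem hs ht hx (hst hx)

lemma IsAVSP.exists_mem (hA : IsAVSP A) (x : Fin m → F) : ∃ s ∈ A, x ∈ s := by
  obtain ⟨s, hs, -⟩ := hA.2.2 x
  exact ⟨s, hs⟩

lemma IsAVSP.exists_mem_ne (hA : IsAVSP A) {s : AffineSubspace F (Fin m → F)} (hs : s ∈ A) :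
    ∃ t ∈ A, t ≠ s := by
  by_contra! h
  refine hA.1 s hs (eq_top_iff.2 fun x _ => ?_)
  obtain ⟨t, ht, hx⟩ := hA.exists_mem x
  exact h t ht ▸ hx

lemma IsAVSP.isTight_iff (hA : IsAVSP A) :
    IsTight A ↔ ∀ x, (∀ s ∈ A, x ∈ s.direction) → x = 0 := by
  refine forall_congr' fun x => ?_
  rw [← not_imp_not, not_ne_iff]
  push Not
  exact imp_congr_left (forall₂_congr fun s hs => vadd_coe_eq_iff_mem_direction (hA.2.1 s hs) x)

/-- `U` is saturated with respect to the family `A` if it is a union of elements of `A`. For an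
affine vector space partition, irreducibility says that the only nonempty saturated affine
subspaces are the elements of `A` and the whole space. -/
def IsSaturated (A : Set (AffineSubspace F (Fin m → F))) (U : AffineSubspace F (Fin m → F)) :
    Prop :=
  ∀ x ∈ U, ∃ s ∈ A, x ∈ s ∧ s ≤ U

lemma IsAVSP.not_isReducible_iff [Finite F] (hA : IsAVSP A) :
    ¬ IsReducible A ↔
      ∀ U : AffineSubspace F (Fin m → F), (U : Set (Fin m → F)).Nonempty → IsSaturated A U →
        U ∈ A ∨ U = ⊤ := by
  constructor
  · rintro hirr U ⟨x, hx⟩ hU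
    by_contra! hcon
    obtain ⟨s, hs, -, hsU⟩ := hU x hx
    obtain ⟨y, hyU, hys⟩ := SetLike.exists_of_lt (hsU.lt_of_ne fun h => hcon.1 (h ▸ hs))
    obtain ⟨t, ht, hyt, htU⟩ := hU y hyU
    refine hirr ⟨U, hcon.2, {a | a ∈ A ∧ a ≤ U}, fun a ha => ha.1, ?_, fun a ha => ha.2, ?_⟩
    · exact (Set.one_lt_ncard (Set.toFinite _)).2
        ⟨s, ⟨hs, hsU⟩, t, ⟨ht, htU⟩, fun h => hys (h ▸ hyt)⟩
    · intro z hz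
      obtain ⟨a, ha, hza, haU⟩ := hU z hz
      exact ⟨a, ⟨⟨ha, haU⟩, hza⟩, fun b hb => hA.eq_of_mem hb.1.1 ha hb.2 hza⟩
  · rintro hsat ⟨U, hU, S, hSA, hS, hSU, hpart⟩
    have hUsat : IsSaturated A U := fun x hx => by
      obtain ⟨s, ⟨hs, hxs⟩, -⟩ := hpart x hx
      exact ⟨s, hSA hs, hxs, hSU s hs⟩
    obtain ⟨s, hs⟩ := Set.nonempty_of_ncard_ne_zero (by omega : S.ncard ≠ 0)
    have hUA : U ∈ A :=
      (hsat U ((hA.2.1 s (hSA hs)).mono (hSU s hs)) hUsat).resolve_right hU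
    have hSsub : S ⊆ {U} := fun t ht => hA.eq_of_le (hSA ht) hUA (hSU t ht)
    have hcard := Set.ncard_le_ncard hSsub
    rw [Set.ncard_singleton] at hcard
    omega

variable {f : (Fin k → F) →ᵃ[F] (Fin m → F)}

lemma IsAVSP.image_comap (hA : IsAVSP A) (hf : Function.Surjective f) :
    IsAVSP (AffineSubspace.comap f '' A) := by
  refine ⟨?_, ?_, fun x => ?_⟩
  · rintro _ ⟨s, hs, rfl⟩ htop
    exact hA.1 s hs (comap_injective_of_surjective hf htop)
  · rintro _ ⟨s, hs, rfl⟩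
    exact (hA.2.1 s hs).preimage hf
  · obtain ⟨s, hs, hxs⟩ := hA.exists_mem (f x)
    refine ⟨s.comap f, ⟨⟨s, hs, rfl⟩, hxs⟩, ?_⟩
    rintro _ ⟨⟨t, ht, rfl⟩, hxt⟩
    rw [hA.eq_of_mem ht hs hxt hxs]

lemma not_isReducible_image_comap [Finite F] (hA : IsAVSP A) (hirr : ¬ IsReducible A)
    (hf : Function.Surjective f) : ¬ IsReducible (AffineSubspace.comap f '' A) := by
  refine (hA.image_comap hf).not_isReducible_iff.2 fun U hU hsat => ?_
  have hmap : (U.map f).comap f = U := by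
    refine le_antisymm ?_ (AffineSubspace.le_comap_map f U)
    rintro y ⟨z, hz, hzy⟩
    obtain ⟨_, ⟨s, -, rfl⟩, hzs, hsU⟩ := hsat z hz
    refine hsU (AffineSubspace.mem_comap.2 ?_)
    rwa [← hzy]
  have hmapsat : IsSaturated A (U.map f) := by
    rintro _ ⟨z, hz, rfl⟩
    obtain ⟨_, ⟨s, hs, rfl⟩, hzs, hsU⟩ := hsat z hz
    refine ⟨s, hs, hzs, fun y hy => ?_⟩
    obtain ⟨w, rfl⟩ := hf y
    exact ⟨w, hsU hy, rfl⟩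
  rw [← hmap]
  refine (hA.not_isReducible_iff.1 hirr _ (hU.image f) hmapsat).imp ?_ ?_
  · exact Set.mem_image_of_mem _
  · intro htop
    rw [htop, AffineSubspace.comap_top]

end Partition

section Cons

variable {F V P : Type*} [Field F] [AddCommGroup V] [Module F V] [AddTorsor V P] {m : ℕ}

/-- The affine map `x ↦ (c x, f x)` into `F × F^m = F^(m+1)`. -/
def consMap (c : P →ᵃ[F] F) (f : P →ᵃ[F] (Fin m → F)) : P →ᵃ[F] (Fin (m + 1) → F) :=
  AffineMap.pi (Fin.cons (α := fun _ => P →ᵃ[F] F) c fun i => (AffineMap.proj i).comp f)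

@[simp]
lemma consMap_apply (c : P →ᵃ[F] F) (f : P →ᵃ[F] (Fin m → F)) (x : P) :
    consMap c f x = Fin.cons (c x) (f x) := by
  ext i
  cases i using Fin.cases <;> rfl

@[simp]
lemma linear_consMap_apply (c : P →ᵃ[F] F) (f : P →ᵃ[F] (Fin m → F)) (v : V) :
    (consMap c f).linear v = Fin.cons (c.linear v) (f.linear v) := by
  ext i
  cases i using Fin.cases <;> rfl

/-- The projection `F^(m+1) = F × F^m → F^m`. -/
def tailMap : (Fin (m + 1) → F) →ᵃ[F] (Fin m → F) :=
  (LinearMap.funLeft F F Fin.succ).toAffineMap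

@[simp]
lemma tailMap_apply (w : Fin (m + 1) → F) :
    (tailMap : (Fin (m + 1) → F) →ᵃ[F] (Fin m → F)) w = Fin.tail w := rfl

@[simp]
lemma linear_tailMap_apply (w : Fin (m + 1) → F) :
    (tailMap : (Fin (m + 1) → F) →ᵃ[F] (Fin m → F)).linear w = Fin.tail w := rfl

lemma tailMap_surjective :
    Function.Surjective (tailMap : (Fin (m + 1) → F) →ᵃ[F] (Fin m → F)) :=
  fun x => ⟨Fin.cons 0 x, rfl⟩

/-- The cylinder `F × U` in `F^(m+1)` over an affine subspace `U` of `F^m`. -/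
def cylinder (U : AffineSubspace F (Fin m → F)) : AffineSubspace F (Fin (m + 1) → F) :=
  U.comap tailMap

lemma mem_cylinder {U : AffineSubspace F (Fin m → F)} {w : Fin (m + 1) → F} :
    w ∈ cylinder U ↔ Fin.tail w ∈ U := Iff.rfl

lemma nonempty_cylinder {U : AffineSubspace F (Fin m → F)} (hU : (U : Set (Fin m → F)).Nonempty) :
    (cylinder U : Set (Fin (m + 1) → F)).Nonempty :=
  hU.preimage tailMap_surjective

lemma mem_direction_cylinder {U : AffineSubspace F (Fin m → F)}
    (hU : (U : Set (Fin m → F)).Nonempty) {w : Fin (m + 1) → F} :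
    w ∈ (cylinder U).direction ↔ Fin.tail w ∈ U.direction := by
  rw [cylinder, direction_comap_of_surjective tailMap_surjective hU, Submodule.mem_comap,
    linear_tailMap_apply]

lemma finrank_direction_cylinder {U : AffineSubspace F (Fin m → F)}
    (hU : (U : Set (Fin m → F)).Nonempty) :
    Module.finrank F (cylinder U).direction = Module.finrank F U.direction + 1 := by
  have hrank := finrank_comap_add_finrank_of_surjective
    ((AffineMap.linear_surjective_iff _).2 (tailMap_surjective (F := F) (m := m))) U.direction
  rw [← direction_comap_of_surjective tailMap_surjective hU, Module.finrank_fin_fun,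
    Module.finrank_fin_fun] at hrank
  exact Nat.add_right_cancel (hrank.trans (by ring))

/-- The embedding of `F^m` as the hyperplane `{c} × F^m` of `F^(m+1)`. -/
def layerMap (c : F) : (Fin m → F) →ᵃ[F] (Fin (m + 1) → F) :=
  consMap (AffineMap.const F _ c) (AffineMap.id F _)

/-- The copy `{c} × a` of the affine subspace `a` of `F^m`. -/
def layer (c : F) (a : AffineSubspace F (Fin m → F)) : AffineSubspace F (Fin (m + 1) → F) :=
  a.map (layerMap c)

/-- The part of `U` in the hyperplane `{c} × F^m`, viewed as an affine subspace of `F^m`. -/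
def slice (c : F) (U : AffineSubspace F (Fin (m + 1) → F)) : AffineSubspace F (Fin m → F) :=
  U.comap (layerMap c)

lemma mem_slice {c : F} {U : AffineSubspace F (Fin (m + 1) → F)} {x : Fin m → F} :
    x ∈ slice c U ↔ (Fin.cons c x : Fin (m + 1) → F) ∈ U := by
  simp [slice, layerMap]

lemma tail_mem_slice {U : AffineSubspace F (Fin (m + 1) → F)} {w : Fin (m + 1) → F} :
    Fin.tail w ∈ slice (w 0) U ↔ w ∈ U := by
  rw [mem_slice, Fin.cons_self_tail]

lemma mem_layer {c : F} {a : AffineSubspace F (Fin m → F)} {w : Fin (m + 1) → F} :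
    w ∈ layer c a ↔ w 0 = c ∧ Fin.tail w ∈ a := by
  rw [layer, AffineSubspace.mem_map]
  constructor
  · rintro ⟨x, hx, rfl⟩
    simpa [layerMap] using hx
  · rintro ⟨rfl, hw⟩
    exact ⟨Fin.tail w, hw, by simp [layerMap]⟩

lemma layer_le_iff_le_slice {c : F} {a : AffineSubspace F (Fin m → F)}
    {U : AffineSubspace F (Fin (m + 1) → F)} : layer c a ≤ U ↔ a ≤ slice c U :=
  AffineSubspace.map_le_iff_le_comap

lemma layer_injective (c : F) :
    Function.Injective (layer c : AffineSubspace F (Fin m → F) → _) := by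
  intro a b hab
  ext x
  have hmem : (Fin.cons c x : Fin (m + 1) → F) ∈ layer c a ↔ Fin.cons c x ∈ layer c b := by rw [hab]
  simpa [mem_layer] using hmem

lemma mem_direction_layer {c : F} {a : AffineSubspace F (Fin m → F)}
    {w : Fin (m + 1) → F} :
    w ∈ (layer c a).direction ↔ w 0 = 0 ∧ Fin.tail w ∈ a.direction := by
  rw [layer, AffineSubspace.map_direction, Submodule.mem_map]
  constructor
  · rintro ⟨v, hv, rfl⟩
    simpa [layerMap] using hv
  · rintro ⟨hw, hv⟩
    exact ⟨Fin.tail w, hv, by simp [layerMap, ← hw]⟩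

lemma direction_slice_eq {U : AffineSubspace F (Fin (m + 1) → F)} {c d : F} {x y : Fin m → F}
    (hx : x ∈ slice c U) (hy : y ∈ slice d U) :
    (slice c U).direction = (slice d U).direction := by
  have hlinear : (layerMap c : (Fin m → F) →ᵃ[F] _).linear = (layerMap d).linear :=
    LinearMap.ext fun v => by simp [layerMap]
  rw [slice, slice, direction_comap_of_mem hx, direction_comap_of_mem hy, hlinear]

end Cons

section Glue

variable {F : Type*} [Field F] {m : ℕ}

/-- Gluing a family of partitions `𝒜 c` of `F^m`, one for each hyperplane `{c} × F^m` of `F^(m+1)`,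
along an element `E` common to all of them: the copies of `E` are merged into the cylinder over `E`
and all other elements stay in their hyperplane. -/
def glue (E : AffineSubspace F (Fin m → F)) (𝒜 : F → Set (AffineSubspace F (Fin m → F))) :
    Set (AffineSubspace F (Fin (m + 1) → F)) :=
  insert (cylinder E) (⋃ c, layer c '' (𝒜 c \ {E}))

variable {E : AffineSubspace F (Fin m → F)} {𝒜 : F → Set (AffineSubspace F (Fin m → F))}

lemma mem_glue {s : AffineSubspace F (Fin (m + 1) → F)} :
    s ∈ glue E 𝒜 ↔ s = cylinder E ∨ ∃ c, ∃ a ∈ 𝒜 c, a ≠ E ∧ layer c a = s := by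
  simp [glue, and_assoc]

lemma cylinder_mem_glue : cylinder E ∈ glue E 𝒜 := Set.mem_insert _ _

lemma layer_mem_glue {c : F} {a : AffineSubspace F (Fin m → F)} (ha : a ∈ 𝒜 c) (hne : a ≠ E) :
    layer c a ∈ glue E 𝒜 :=
  mem_glue.2 (.inr ⟨c, a, ha, hne, rfl⟩)

lemma isAVSP_glue (h𝒜 : ∀ c, IsAVSP (𝒜 c)) (hE : ∀ c, E ∈ 𝒜 c) : IsAVSP (glue E 𝒜) := by
  refine ⟨fun s hs htop => ?_, fun s hs => ?_, fun w => ?_⟩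
  · rcases mem_glue.1 hs with rfl | ⟨c, a, -, -, rfl⟩
    · exact ((h𝒜 0).image_comap tailMap_surjective).1 _ ⟨E, hE 0, rfl⟩ htop
    · have hmem : (Fin.cons (c + 1) 0 : Fin (m + 1) → F) ∈ layer c a :=
        htop ▸ AffineSubspace.mem_top _ _ _
      simp [mem_layer] at hmem
  · rcases mem_glue.1 hs with rfl | ⟨c, a, ha, -, rfl⟩
    · exact nonempty_cylinder ((h𝒜 0).2.1 E (hE 0))
    · exact ((h𝒜 c).2.1 a ha).image _
  · by_cases hwE : Fin.tail w ∈ E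
    · refine ⟨cylinder E, ⟨cylinder_mem_glue, hwE⟩, ?_⟩
      rintro s ⟨hs, hws⟩
      rcases mem_glue.1 hs with rfl | ⟨c, a, ha, hne, rfl⟩
      · rfl
      · exact absurd ((h𝒜 c).eq_of_mem ha (hE c) (mem_layer.1 hws).2 hwE) hne
    · obtain ⟨a, ha, hwa⟩ := (h𝒜 (w 0)).exists_mem (Fin.tail w)
      have hne : a ≠ E := fun h => hwE (h ▸ hwa)
      refine ⟨layer (w 0) a, ⟨layer_mem_glue ha hne, mem_layer.2 ⟨rfl, hwa⟩⟩, ?_⟩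
      rintro s ⟨hs, hws⟩
      rcases mem_glue.1 hs with rfl | ⟨c, b, hb, -, rfl⟩
      · exact absurd hws hwE
      · obtain ⟨rfl, hwb⟩ := mem_layer.1 hws
        rw [(h𝒜 (w 0)).eq_of_mem hb ha hwb hwa]

lemma isTight_glue (h𝒜 : ∀ c, IsAVSP (𝒜 c)) (hE : ∀ c, E ∈ 𝒜 c)
    (htight : ∀ x, (∀ c, ∀ a ∈ 𝒜 c, x ∈ a.direction) → x = 0) : IsTight (glue E 𝒜) := by
  refine (isAVSP_glue h𝒜 hE).isTight_iff.2 fun w hw => ?_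
  have hhead : w 0 = 0 := by
    obtain ⟨a, ha, hne⟩ := (h𝒜 0).exists_mem_ne (hE 0)
    exact (mem_direction_layer.1 (hw _ (layer_mem_glue ha hne))).1
  have htail : Fin.tail w = 0 := by
    refine htight _ fun c a ha => ?_
    by_cases hne : a = E
    · subst hne
      exact (mem_direction_cylinder ((h𝒜 c).2.1 a ha)).1 (hw _ cylinder_mem_glue)
    · exact (mem_direction_layer.1 (hw _ (layer_mem_glue ha hne))).2
  exact funext (Fin.cases hhead (congrFun htail))

lemma IsSaturated.slice {U : AffineSubspace F (Fin (m + 1) → F)} (hE : ∀ c, E ∈ 𝒜 c)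
    (hU : IsSaturated (glue E 𝒜) U) (c : F) : IsSaturated (𝒜 c) (slice c U) := by
  intro x hx
  obtain ⟨s, hs, hxs, hsU⟩ := hU _ (mem_slice.1 hx)
  rcases mem_glue.1 hs with rfl | ⟨d, a, ha, -, rfl⟩
  · exact ⟨E, hE c, hxs, fun y hy => mem_slice.2 (hsU (mem_cylinder.2 hy))⟩
  · obtain ⟨rfl, hxa⟩ := mem_layer.1 hxs
    exact ⟨a, ha, hxa, layer_le_iff_le_slice.1 hsU⟩

lemma eq_cylinder_or_eq_top_of_cylinder_le (h𝒜 : ∀ c, IsAVSP (𝒜 c)) (hE : ∀ c, E ∈ 𝒜 c)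
    {U : AffineSubspace F (Fin (m + 1) → F)} (hEU : cylinder E ≤ U)
    (hslice : ∀ c, slice c U ∈ 𝒜 c ∨ slice c U = ⊤) : U = cylinder E ∨ U = ⊤ := by
  have hEslice (c : F) : E ≤ slice c U := fun x hx => mem_slice.2 (hEU (mem_cylinder.2 hx))
  by_cases htop : ∃ c, slice c U = ⊤
  · obtain ⟨c, hc⟩ := htop
    obtain ⟨p, hp⟩ := (h𝒜 c).2.1 E (hE c)
    have hall (d : F) : slice d U = ⊤ := by
      rw [← AffineSubspace.direction_eq_top_iff_of_nonempty ⟨p, hEslice d hp⟩,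
        direction_slice_eq (hEslice d hp) (hEslice c hp), hc, AffineSubspace.direction_top]
    refine .inr (eq_top_iff.2 fun w _ => tail_mem_slice.1 ?_)
    rw [hall]
    exact AffineSubspace.mem_top _ _ _
  · push Not at htop
    refine .inl (le_antisymm (fun w hw => ?_) hEU)
    rw [mem_cylinder, (h𝒜 (w 0)).eq_of_le (hE _) ((hslice _).resolve_right (htop _)) (hEslice _)]
    exact tail_mem_slice.2 hw

lemma mem_glue_of_not_cylinder_le (h𝒜 : ∀ c, IsAVSP (𝒜 c)) (hE : ∀ c, E ∈ 𝒜 c)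
    (hpar : ∀ ⦃c a⦄, a ∈ 𝒜 c → a ≠ E → ∀ ⦃d b⦄, b ∈ 𝒜 d → b ≠ E →
      a.direction = b.direction → c = d)
    {U : AffineSubspace F (Fin (m + 1) → F)} (hU : (U : Set (Fin (m + 1) → F)).Nonempty)
    (hsat : IsSaturated (glue E 𝒜) U) (hEU : ¬ cylinder E ≤ U)
    (hslice : ∀ c, (slice c U : Set (Fin m → F)).Nonempty → slice c U ∈ 𝒜 c ∨ slice c U = ⊤) :
    U ∈ glue E 𝒜 := by
  have hdisj {w} (hw : w ∈ U) : Fin.tail w ∉ E := fun hwE => by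
    obtain ⟨s, hs, hws, hsU⟩ := hsat w hw
    rw [(isAVSP_glue h𝒜 hE).eq_of_mem hs cylinder_mem_glue hws hwE] at hsU
    exact hEU hsU
  obtain ⟨p, hp⟩ := (h𝒜 0).2.1 E (hE 0)
  have hmem {w} (hw : w ∈ U) : slice (w 0) U ∈ 𝒜 (w 0) ∧ slice (w 0) U ≠ E := by
    refine ⟨(hslice _ ⟨_, tail_mem_slice.2 hw⟩).resolve_right fun htop => ?_, fun h => ?_⟩
    · have hpU : p ∈ slice (w 0) U := htop ▸ AffineSubspace.mem_top _ _ _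
      exact hdisj (mem_slice.1 hpU) hp
    · exact hdisj hw (h ▸ tail_mem_slice.2 hw)
  obtain ⟨w, hw⟩ := hU
  have hlevel {v} (hv : v ∈ U) : v 0 = w 0 :=
    hpar (hmem hv).1 (hmem hv).2 (hmem hw).1 (hmem hw).2
      (direction_slice_eq (tail_mem_slice.2 hv) (tail_mem_slice.2 hw))
  have hUlayer : U = layer (w 0) (slice (w 0) U) := by
    refine le_antisymm (fun v hv => mem_layer.2 ⟨hlevel hv, ?_⟩) (layer_le_iff_le_slice.2 le_rfl)
    rw [← hlevel hv]
    exact tail_mem_slice.2 hv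
  rw [hUlayer]
  exact layer_mem_glue (hmem hw).1 (hmem hw).2

lemma not_isReducible_glue [Finite F] (h𝒜 : ∀ c, IsAVSP (𝒜 c)) (hE : ∀ c, E ∈ 𝒜 c)
    (hirr : ∀ c, ¬ IsReducible (𝒜 c))
    (hpar : ∀ ⦃c a⦄, a ∈ 𝒜 c → a ≠ E → ∀ ⦃d b⦄, b ∈ 𝒜 d → b ≠ E →
      a.direction = b.direction → c = d) :
    ¬ IsReducible (glue E 𝒜) := by
  refine (isAVSP_glue h𝒜 hE).not_isReducible_iff.2 fun U hU hsat => ?_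
  have hslice (c : F) (hne : (slice c U : Set (Fin m → F)).Nonempty) :
      slice c U ∈ 𝒜 c ∨ slice c U = ⊤ :=
    (h𝒜 c).not_isReducible_iff.1 (hirr c) _ hne (hsat.slice hE c)
  by_cases hEU : cylinder E ≤ U
  · have hnonempty (c : F) : (slice c U : Set (Fin m → F)).Nonempty :=
      ((h𝒜 c).2.1 E (hE c)).mono fun x hx => mem_slice.2 (hEU (mem_cylinder.2 hx))
    refine (eq_cylinder_or_eq_top_of_cylinder_le h𝒜 hE hEU
      fun c => hslice c (hnonempty c)).imp_left fun h => ?_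
    exact h ▸ cylinder_mem_glue
  · exact .inl (mem_glue_of_not_cylinder_le h𝒜 hE hpar hU hsat hEU hslice)

lemma layer_ne_cylinder {a : AffineSubspace F (Fin m → F)} (hE : (E : Set (Fin m → F)).Nonempty)
    (c : F) : layer c a ≠ cylinder E := by
  obtain ⟨p, hp⟩ := hE
  intro h
  have hmem : (Fin.cons (c + 1) p : Fin (m + 1) → F) ∈ layer c a := by
    rw [h, mem_cylinder]
    exact hp
  simp [mem_layer] at hmem

lemma ncard_glue [Fintype F] (h𝒜 : ∀ c, IsAVSP (𝒜 c)) (hE : ∀ c, E ∈ 𝒜 c) :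
    (glue E 𝒜).ncard = ∑ c, (𝒜 c \ {E}).ncard + 1 := by
  have hdisj : Pairwise (Function.onFun Disjoint fun c => layer c '' (𝒜 c \ {E})) := by
    intro c d hcd
    refine Set.disjoint_left.2 ?_
    rintro _ ⟨a, ha, rfl⟩ ⟨b, -, hab⟩
    obtain ⟨x, hx⟩ := (h𝒜 c).2.1 a ha.1
    have hmem : (Fin.cons c x : Fin (m + 1) → F) ∈ layer d b := hab ▸ mem_layer.2 ⟨rfl, hx⟩
    exact hcd (mem_layer.1 hmem).1
  have hnotMem : cylinder E ∉ ⋃ c, layer c '' (𝒜 c \ {E}) := by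
    simp [layer_ne_cylinder ((h𝒜 0).2.1 E (hE 0))]
  rw [glue, Set.ncard_insert_of_notMem hnotMem (Set.toFinite _),
    Set.ncard_iUnion_of_finite (fun c => Set.toFinite _) hdisj, finsum_eq_sum_of_fintype]
  simp_rw [Set.ncard_image_of_injective _ (layer_injective _)]

end Glue

section SkewLines

/-- Base points of the lines `skewLine i`. -/
def skewLinePoint : Fin 4 → Fin 3 → ZMod 2 :=
  ![![0, 0, 0], ![0, 1, 0], ![0, 0, 1], ![1, 1, 0]]

/-- Direction vectors of the lines `skewLine i`. -/
def skewLineVector : Fin 4 → Fin 3 → ZMod 2 :=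
  ![![1, 0, 0], ![1, 1, 1], ![0, 1, 0], ![0, 0, 1]]

/-- Four pairwise skew lines partitioning `F_2^3`, the first one being the cylinder over the origin
of `F_2^2`. -/
def skewLine (i : Fin 4) : AffineSubspace (ZMod 2) (Fin 3 → ZMod 2) :=
  AffineSubspace.mk' (skewLinePoint i) (Submodule.span (ZMod 2) {skewLineVector i})

lemma mem_skewLine {i : Fin 4} {x : Fin 3 → ZMod 2} :
    x ∈ skewLine i ↔ ∃ c : ZMod 2, c • skewLineVector i = x - skewLinePoint i := by
  rw [skewLine, AffineSubspace.mem_mk', Submodule.mem_span_singleton, vsub_eq_sub]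

lemma skewLinePoint_mem (i : Fin 4) : skewLinePoint i ∈ skewLine i :=
  AffineSubspace.self_mem_mk' _ _

lemma mem_skewLine_zero_iff {x : Fin 3 → ZMod 2} : x ∈ skewLine 0 ↔ Fin.tail x = 0 := by
  rw [mem_skewLine]
  decide +revert

lemma eq_zero_or_eq_zero_of_cons_mem_direction_skewLine {i : Fin 4} {c : ZMod 2}
    (h : (Fin.cons c 0 : Fin 3 → ZMod 2) ∈ (skewLine i).direction) : i = 0 ∨ c = 0 := by
  rw [skewLine, AffineSubspace.direction_mk', Submodule.mem_span_singleton] at h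
  decide +revert

lemma exists_mem_skewLine (x : Fin 3 → ZMod 2) : ∃ i, x ∈ skewLine i := by
  simp_rw [mem_skewLine]
  decide +revert

lemma eq_of_mem_skewLine {i j : Fin 4} {x : Fin 3 → ZMod 2} (hi : x ∈ skewLine i)
    (hj : x ∈ skewLine j) : i = j := by
  rw [mem_skewLine] at hi hj
  decide +revert

lemma skewLine_injective : Function.Injective skewLine := fun i _ hij =>
  eq_of_mem_skewLine (skewLinePoint_mem i) (hij ▸ skewLinePoint_mem i)

lemma exists_eq_combination_of_skewLine_ne {i j : Fin 4} (hij : i ≠ j) (x : Fin 3 → ZMod 2) :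
    ∃ a b c : ZMod 2, x = a • skewLineVector i + b • skewLineVector j +
      c • (skewLinePoint j - skewLinePoint i) + skewLinePoint i := by
  decide +revert

lemma eq_top_of_skewLine_le {i j : Fin 4} (hij : i ≠ j)
    {U : AffineSubspace (ZMod 2) (Fin 3 → ZMod 2)} (hi : skewLine i ≤ U) (hj : skewLine j ≤ U) :
    U = ⊤ := by
  have hvector {k : Fin 4} (hk : skewLine k ≤ U) : skewLineVector k ∈ U.direction := by
    refine AffineSubspace.direction_le hk ?_
    rw [skewLine, AffineSubspace.direction_mk']
    exact Submodule.mem_span_singleton_self _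
  have hpi := hi (skewLinePoint_mem i)
  have hpj := hj (skewLinePoint_mem j)
  refine eq_top_iff.2 fun x _ => ?_
  obtain ⟨a, b, c, rfl⟩ := exists_eq_combination_of_skewLine_ne hij x
  exact AffineSubspace.vadd_mem_of_mem_direction
    (add_mem (add_mem (U.direction.smul_mem a (hvector hi)) (U.direction.smul_mem b (hvector hj)))
      (U.direction.smul_mem c (AffineSubspace.vsub_mem_direction hpj hpi))) hpi

lemma isAVSP_range_skewLine : IsAVSP (Set.range skewLine) := by
  refine ⟨?_, ?_, fun x => ?_⟩
  · rintro _ ⟨i, rfl⟩ htop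
    obtain ⟨j, hij⟩ := exists_ne i
    have hmem : skewLinePoint j ∈ skewLine i := htop ▸ AffineSubspace.mem_top _ _ _
    exact hij (eq_of_mem_skewLine (skewLinePoint_mem j) hmem)
  · rintro _ ⟨i, rfl⟩
    exact ⟨_, skewLinePoint_mem i⟩
  · obtain ⟨i, hi⟩ := exists_mem_skewLine x
    refine ⟨skewLine i, ⟨⟨i, rfl⟩, hi⟩, ?_⟩
    rintro _ ⟨⟨j, rfl⟩, hj⟩
    rw [eq_of_mem_skewLine hi hj]

lemma not_isReducible_range_skewLine : ¬ IsReducible (Set.range skewLine) := by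
  refine isAVSP_range_skewLine.not_isReducible_iff.2 ?_
  rintro U ⟨x, hx⟩ hsat
  obtain ⟨_, ⟨i, rfl⟩, -, hiU⟩ := hsat x hx
  refine or_iff_not_imp_right.2 fun htop => ⟨i, le_antisymm hiU fun y hy => ?_⟩
  obtain ⟨_, ⟨j, rfl⟩, hyj, hjU⟩ := hsat y hy
  obtain rfl | hij := eq_or_ne i j
  · exact hyj
  · exact absurd (eq_top_of_skewLine_le hij hiU hjU) htop

end SkewLines

section Extension

variable {k : ℕ} {A : Set (AffineSubspace (ZMod 2) (Fin k → ZMod 2))}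
  {U : AffineSubspace (ZMod 2) (Fin k → ZMod 2)}
  {q : (Fin k → ZMod 2) →ᵃ[ZMod 2] (Fin 2 → ZMod 2)}

/-- The affine map `(y, v) ↦ (y, q v)` from `F_2 × F_2^k` to `F_2 × F_2^2`. -/
def idProdMap (q : (Fin k → ZMod 2) →ᵃ[ZMod 2] (Fin 2 → ZMod 2)) :
    (Fin (k + 1) → ZMod 2) →ᵃ[ZMod 2] (Fin 3 → ZMod 2) :=
  consMap (AffineMap.proj 0) (q.comp tailMap)

lemma idProdMap_surjective (hq : Function.Surjective q) :
    Function.Surjective (idProdMap q) := by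
  intro x
  obtain ⟨v, hv⟩ := hq (Fin.tail x)
  exact ⟨Fin.cons (x 0) v, by simp [idProdMap, hv]⟩

lemma linear_idProdMap_of_tail_eq_zero {w : Fin (k + 1) → ZMod 2} (hw : Fin.tail w = 0) :
    (idProdMap q).linear w = Fin.cons (w 0) 0 := by
  simp [idProdMap, hw]

/-- The two partitions of `F_2^(k+1)` that are glued: the cylinders over the elements of `A`, and
the preimages of the four skew lines under `idProdMap q`. -/
def layerFamily (A : Set (AffineSubspace (ZMod 2) (Fin k → ZMod 2)))
    (q : (Fin k → ZMod 2) →ᵃ[ZMod 2] (Fin 2 → ZMod 2)) (c : ZMod 2) :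
    Set (AffineSubspace (ZMod 2) (Fin (k + 1) → ZMod 2)) :=
  if c = 0 then cylinder '' A else AffineSubspace.comap (idProdMap q) '' Set.range skewLine

lemma layerFamily_zero : layerFamily A q 0 = cylinder '' A := if_pos rfl

lemma layerFamily_of_ne_zero {c : ZMod 2} (hc : c ≠ 0) :
    layerFamily A q c = AffineSubspace.comap (idProdMap q) '' Set.range skewLine := if_neg hc

lemma isAVSP_layerFamily (hA : IsAVSP A) (hq : Function.Surjective q) (c : ZMod 2) :
    IsAVSP (layerFamily A q c) := by
  obtain rfl | hc := eq_or_ne c 0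
  · exact layerFamily_zero ▸ hA.image_comap tailMap_surjective
  · exact layerFamily_of_ne_zero hc ▸ isAVSP_range_skewLine.image_comap (idProdMap_surjective hq)

lemma not_isReducible_layerFamily (hA : IsAVSP A) (hirr : ¬ IsReducible A)
    (hq : Function.Surjective q) (c : ZMod 2) : ¬ IsReducible (layerFamily A q c) := by
  obtain rfl | hc := eq_or_ne c 0
  · exact layerFamily_zero ▸ not_isReducible_image_comap hA hirr tailMap_surjective
  · exact layerFamily_of_ne_zero hc ▸ not_isReducible_image_comap isAVSP_range_skewLine
      not_isReducible_range_skewLine (idProdMap_surjective hq)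

lemma comap_idProdMap_skewLine_zero (hqU : ∀ x, x ∈ U ↔ q x = 0) :
    (skewLine 0).comap (idProdMap q) = cylinder U := by
  ext w
  rw [AffineSubspace.mem_comap, mem_skewLine_zero_iff, mem_cylinder, hqU]
  simp [idProdMap]

lemma cylinder_mem_layerFamily (hU : U ∈ A) (hqU : ∀ x, x ∈ U ↔ q x = 0) (c : ZMod 2) :
    cylinder U ∈ layerFamily A q c := by
  obtain rfl | hc := eq_or_ne c 0
  · exact layerFamily_zero ▸ Set.mem_image_of_mem _ hU
  · rw [layerFamily_of_ne_zero hc, ← comap_idProdMap_skewLine_zero hqU]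
    exact Set.mem_image_of_mem _ (Set.mem_range_self 0)

lemma eq_zero_of_mem_direction_comap_skewLine (hq : Function.Surjective q) {i : Fin 4} (hi : i ≠ 0)
    {w : Fin (k + 1) → ZMod 2} (htail : Fin.tail w = 0)
    (hw : w ∈ ((skewLine i).comap (idProdMap q)).direction) : w 0 = 0 := by
  rw [direction_comap_of_surjective (idProdMap_surjective hq) ⟨_, skewLinePoint_mem i⟩,
    Submodule.mem_comap, linear_idProdMap_of_tail_eq_zero htail] at hw
  exact (eq_zero_or_eq_zero_of_cons_mem_direction_skewLine hw).resolve_left hi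

lemma eq_zero_of_forall_mem_direction_layerFamily (hA : IsAVSP A) (ht : IsTight A)
    (hq : Function.Surjective q) {w : Fin (k + 1) → ZMod 2}
    (hw : ∀ c, ∀ a ∈ layerFamily A q c, w ∈ a.direction) : w = 0 := by
  have htail : Fin.tail w = 0 := by
    refine hA.isTight_iff.1 ht _ fun u hu => (mem_direction_cylinder (hA.2.1 u hu)).1 ?_
    exact hw 0 _ (layerFamily_zero ▸ Set.mem_image_of_mem _ hu)
  have hhead : w 0 = 0 := by
    refine eq_zero_of_mem_direction_comap_skewLine hq one_ne_zero htail (hw 1 _ ?_)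
    rw [layerFamily_of_ne_zero one_ne_zero]
    exact Set.mem_image_of_mem _ (Set.mem_range_self 1)
  exact funext (Fin.cases hhead (congrFun htail))

lemma cons_one_zero_mem_direction_iff (hA : IsAVSP A) (hq : Function.Surjective q)
    (hqU : ∀ x, x ∈ U ↔ q x = 0) {c : ZMod 2}
    {a : AffineSubspace (ZMod 2) (Fin (k + 1) → ZMod 2)} (ha : a ∈ layerFamily A q c)
    (hne : a ≠ cylinder U) :
    (Fin.cons 1 0 : Fin (k + 1) → ZMod 2) ∈ a.direction ↔ c = 0 := by
  obtain rfl | hc := eq_or_ne c 0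
  · rw [layerFamily_zero] at ha
    obtain ⟨u, hu, rfl⟩ := ha
    simp [mem_direction_cylinder (hA.2.1 u hu)]
  · rw [layerFamily_of_ne_zero hc] at ha
    obtain ⟨_, ⟨i, rfl⟩, rfl⟩ := ha
    have hi : i ≠ 0 := by
      rintro rfl
      exact hne (comap_idProdMap_skewLine_zero hqU)
    refine iff_of_false (fun hmem => ?_) hc
    exact one_ne_zero (eq_zero_of_mem_direction_comap_skewLine hq hi (Fin.tail_cons _ _) hmem)

lemma eq_of_direction_eq_of_mem_layerFamily (hA : IsAVSP A) (hq : Function.Surjective q)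
    (hqU : ∀ x, x ∈ U ↔ q x = 0) {c d : ZMod 2}
    {a b : AffineSubspace (ZMod 2) (Fin (k + 1) → ZMod 2)}
    (ha : a ∈ layerFamily A q c) (hane : a ≠ cylinder U)
    (hb : b ∈ layerFamily A q d) (hbne : b ≠ cylinder U) (hab : a.direction = b.direction) :
    c = d := by
  have hiff : c = 0 ↔ d = 0 := by
    rw [← cons_one_zero_mem_direction_iff hA hq hqU ha hane, hab,
      cons_one_zero_mem_direction_iff hA hq hqU hb hbne]
  clear * - hiff
  decide +revert

lemma ncard_layerFamily_zero : (layerFamily A q 0).ncard = A.ncard := by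
  rw [layerFamily_zero]
  exact Set.ncard_image_of_injective _ (comap_injective_of_surjective tailMap_surjective)

lemma ncard_layerFamily_one (hq : Function.Surjective q) : (layerFamily A q 1).ncard = 4 := by
  rw [layerFamily_of_ne_zero one_ne_zero,
    Set.ncard_image_of_injective _ (comap_injective_of_surjective (idProdMap_surjective hq)),
    ← Set.image_univ, Set.ncard_image_of_injective _ skewLine_injective, Set.ncard_univ,
    Nat.card_fin]

lemma ncard_glue_layerFamily (hA : IsAVSP A) (hU : U ∈ A) (hq : Function.Surjective q)
    (hqU : ∀ x, x ∈ U ↔ q x = 0) :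
    (glue (cylinder U) (layerFamily A q)).ncard = A.ncard + 3 := by
  have hmem := cylinder_mem_layerFamily hU hqU
  have hzero := Set.ncard_sdiff_singleton_add_one (hmem 0) (Set.toFinite _)
  have hone := Set.ncard_sdiff_singleton_add_one (hmem 1) (Set.toFinite _)
  rw [ncard_layerFamily_zero] at hzero
  rw [ncard_layerFamily_one hq] at hone
  have hsum := ncard_glue (isAVSP_layerFamily hA hq) hmem
  rw [show (Finset.univ : Finset (ZMod 2)) = {0, 1} from rfl,
    Finset.sum_pair zero_ne_one] at hsum
  omega

end Extension

theorem stmt16 (n : ℕ) (hn : 3 ≤ n)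
    (A : Set (AffineSubspace (ZMod 2) (Fin (n - 1) → ZMod 2)))
    (hA : IsAVSP A) (ht : IsTight A) (hirr : ¬ IsReducible A)
    (U₁ : AffineSubspace (ZMod 2) (Fin (n - 1) → ZMod 2)) (hU₁ : U₁ ∈ A)
    (hd : Module.finrank (ZMod 2) U₁.direction = n - 3) :
    ∃ A' : Set (AffineSubspace (ZMod 2) (Fin (n + 1) → ZMod 2)),
      IsAVSP A' ∧ IsTight A' ∧ ¬ IsReducible A' ∧ A'.ncard = A.ncard + 3 ∧
      ∃ s ∈ A', Module.finrank (ZMod 2) s.direction = n - 1 := by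
  obtain ⟨k, rfl⟩ : ∃ k, n = k + 1 := ⟨n - 1, by omega⟩
  have hU₁ne := hA.2.1 U₁ hU₁
  obtain ⟨q, hq, hqU⟩ := exists_surjective_affineMap_mem_iff_eq_zero hU₁ne (d := 2)
    (by rw [hd, Module.finrank_fin_fun]; omega)
  have hlayers := isAVSP_layerFamily hA hq
  have hmem := cylinder_mem_layerFamily hU₁ hqU
  refine ⟨glue (cylinder U₁) (layerFamily A q), isAVSP_glue hlayers hmem,
    isTight_glue hlayers hmem fun _ => eq_zero_of_forall_mem_direction_layerFamily hA ht hq,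
    not_isReducible_glue hlayers hmem (not_isReducible_layerFamily hA hirr hq)
      fun _ _ ha hane _ _ => eq_of_direction_eq_of_mem_layerFamily hA hq hqU ha hane,
    ncard_glue_layerFamily hA hU₁ hq hqU, cylinder (cylinder U₁), cylinder_mem_glue, ?_⟩
  refine (finrank_direction_cylinder (nonempty_cylinder hU₁ne)).trans ?_
  rw [finrank_direction_cylinder hU₁ne, hd]
  omega
end

section
/- For each integer n ≥ 4 there exists an irreducible tight affine vector space partition of F_2^{n-1} of size ⌊(3n-3)/2⌋. -/
open scoped Pointwise

/-!
Call two parts a *triangle* if their union consists of three parallel flats `a`, `b`, `c`, one part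
being `a ∪ b` and the other `c`. A triangle can be used in two ways to partition `V × F_2`, all
parts outside it being multiplied by `F_2`.

* *Rotating*: the columns over `a`, `b`, `c` are cut into `(a ∪ b) × 0`, `c × 0 ∪ a × 1` and
  `(b ∪ c) × 1`. If the only obstructions to irreducibility were families separating the two parts
  of the triangle, the new partition, with one part more, is irreducible.
* *Splitting*: `a ∪ b` is replaced by `(a ∪ b) × 0`, `a × 1` and `b × 1`. With two parts more, this
  leaves two disjoint triangles, `c × F_2` with `b × 1` and `(a ∪ b) × 0` with `a × 1`, and only
  families separating the first of them can obstruct irreducibility.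

Splitting and then rotating the first new triangle adds 2 to the dimension and 3 to the size, and
the second triangle is available for the next round. Starting from a line and two points in
`F_2^2`, the last round consists of a rotation alone or of both steps, according to the parity
of `n`.
-/

lemma zmodTwo_eq_zero_or_one (i : ZMod 2) : i = 0 ∨ i = 1 := by
  decide +revert

lemma zmodTwo_add_add_cancel_right {V : Type*} [AddCommGroup V] [Module (ZMod 2) V] (u r : V) :
    u + r + r = u := by
  rw [add_assoc, ZModModule.add_self, add_zero]

/-- Closure under `x + y + z`: over `F_2` this says that `a` is empty or the point set of an affine
subspace. -/
def IsFlat {V : Type*} [Add V] (a : Set V) : Prop :=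
  ∀ x ∈ a, ∀ y ∈ a, ∀ z ∈ a, x + y + z ∈ a

namespace IsFlat

variable {V W : Type*}

lemma univ [Add V] : IsFlat (Set.univ : Set V) := fun _ _ _ _ _ _ => Set.mem_univ _

lemma prod [Add V] [Add W] {a : Set V} {b : Set W} (ha : IsFlat a) (hb : IsFlat b) :
    IsFlat (a ×ˢ b) :=
  fun x hx y hy z hz => ⟨ha x.1 hx.1 y.1 hy.1 z.1 hz.1, hb x.2 hx.2 y.2 hy.2 z.2 hz.2⟩

lemma preimage [AddZeroClass V] [AddZeroClass W] {a : Set V} (ha : IsFlat a) (f : W →+ V) :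
    IsFlat (f ⁻¹' a) := fun x hx y hy z hz => by
  simpa only [Set.mem_preimage, map_add] using ha (f x) hx (f y) hy (f z) hz

variable [AddCommGroup V] [Module (ZMod 2) V] {a : Set V}

lemma singleton (v : V) : IsFlat {v} := by
  rintro x rfl y rfl z rfl
  simp [ZModModule.add_self]

lemma union_translate (ha : IsFlat a) (r : V) : IsFlat {x | x ∈ a ∨ x + r ∈ a} := by
  rintro x (hx | hx) y (hy | hy) z (hz | hz) <;> have hxyz := ha _ hx _ hy _ hz <;>
    simp only [Set.mem_ofPred_eq, ← add_assoc, add_right_comm _ r,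
      zmodTwo_add_add_cancel_right] at hxyz ⊢ <;>
    simp only [hxyz, true_or, or_true]

lemma translate (ha : IsFlat a) (r : V) : IsFlat {x | x + r ∈ a} := fun x hx y hy z hz => by
  have hxyz := ha _ hx _ hy _ hz
  have hsum : x + r + (y + r) + (z + r) = x + y + z + r + (r + r) := by abel
  rwa [hsum, ZModModule.add_self, add_zero] at hxyz

/-- The affine subspace with a given flat as point set. -/
def toAffineSubspace (ha : IsFlat a) : AffineSubspace (ZMod 2) V where
  carrier := a
  smul_vsub_vadd_mem' := by
    intro c x y z hx hy hz
    obtain rfl | rfl := zmodTwo_eq_zero_or_one c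
    · simpa using hz
    · simpa [ZModModule.sub_eq_add] using ha x hx y hy z hz

end IsFlat

lemma isFlat_affineSubspace {V : Type*} [AddCommGroup V] [Module (ZMod 2) V]
    (U : AffineSubspace (ZMod 2) V) : IsFlat (U : Set V) := fun x hx y hy z hz => by
  simpa [ZModModule.sub_eq_add] using U.smul_vsub_vadd_mem 1 hx hy hz

/-- A tight partition into flats, encoded by the map `col` sending each point to (the label of) its
part. -/
structure IsTightColoring {V I : Type*} [AddZeroClass V] (col : V → I) : Prop where
  surjective : Function.Surjective col
  isFlat_fiber : ∀ i, IsFlat (col ⁻¹' {i})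
  eq_zero_of_forall : ∀ v, (∀ x, col (v + x) = col x) → v = 0

/-- Irreducibility of the partition into the fibers of `col`. -/
def IsIrreducibleColoring {V I : Type*} [Add V] (col : V → I) : Prop :=
  ∀ S : Set I, IsFlat (col ⁻¹' S) → S.Subsingleton ∨ S = Set.univ

/-- The weakening of irreducibility that ignores the families separating the parts `s` and `t`. -/
def IsIrreducibleColoringRel {V I : Type*} [Add V] (col : V → I) (s t : I) : Prop :=
  ∀ S : Set I, IsFlat (col ⁻¹' S) → (s ∈ S ↔ t ∈ S) → S.Subsingleton ∨ S = Set.univ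

lemma IsIrreducibleColoring.rel {V I : Type*} [Add V] {col : V → I}
    (h : IsIrreducibleColoring col) (s t : I) : IsIrreducibleColoringRel col s t :=
  fun S hS _ => h S hS

lemma IsTightColoring.isFlat_fiber_comp {V I J : Type*} [AddZeroClass V] {col : V → I}
    (h : IsTightColoring col) {ι : I → J} (hι : Function.Injective ι) (i : I) :
    IsFlat (ι ∘ col ⁻¹' {ι i}) := by
  rw [Set.preimage_comp, ← Set.image_singleton, hι.preimage_image]
  exact h.isFlat_fiber i

section Equiv

variable {V W I : Type*} [AddZeroClass V] [AddZeroClass W] {col : V → I}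

lemma IsTightColoring.comp_equiv (h : IsTightColoring col) (e : W ≃+ V) :
    IsTightColoring (col ∘ e) where
  surjective := h.surjective.comp e.surjective
  isFlat_fiber i := (h.isFlat_fiber i).preimage e.toAddMonoidHom
  eq_zero_of_forall v hv := by
    refine e.map_eq_zero_iff.1 (h.eq_zero_of_forall _ fun x => ?_)
    simpa using hv (e.symm x)

lemma IsIrreducibleColoring.comp_equiv (h : IsIrreducibleColoring col) (e : W ≃+ V) :
    IsIrreducibleColoring (col ∘ e) := by
  refine fun S hS => h S ?_
  convert hS.preimage e.symm.toAddMonoidHom using 1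
  ext x
  simp

end Equiv

namespace IsTightColoring

variable {m : ℕ} {I : Type*} {col : (Fin m → ZMod 2) → I}

/-- The partition into affine subspaces encoded by a coloring of `F_2^m`. -/
def cells (h : IsTightColoring col) : Set (AffineSubspace (ZMod 2) (Fin m → ZMod 2)) :=
  Set.range fun i => (h.isFlat_fiber i).toAffineSubspace

lemma isAVSP_cells [Nontrivial I] (h : IsTightColoring col) : IsAVSP h.cells := by
  refine ⟨?_, ?_, fun x => ?_⟩
  · rintro _ ⟨i, rfl⟩ htop
    obtain ⟨j, hji⟩ := exists_ne i
    obtain ⟨x, rfl⟩ := h.surjective j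
    have hx : x ∈ (h.isFlat_fiber i).toAffineSubspace := htop.ge (AffineSubspace.mem_top _ _ x)
    exact hji hx
  · rintro _ ⟨i, rfl⟩
    exact h.surjective i
  · refine ⟨_, ⟨⟨col x, rfl⟩, rfl⟩, ?_⟩
    rintro _ ⟨⟨i, rfl⟩, rfl⟩
    rfl

lemma isTight_cells (h : IsTightColoring col) : IsTight h.cells := by
  intro v hv
  by_contra! hfix
  refine hv (h.eq_zero_of_forall v fun x => ?_)
  have hmem := Set.vadd_mem_vadd_set (a := v) (show x ∈ col ⁻¹' {col x} from rfl)
  exact (hfix _ ⟨col x, rfl⟩).subset hmem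

lemma not_isReducible_cells (h : IsTightColoring col) (hirr : IsIrreducibleColoring col) :
    ¬ IsReducible h.cells := by
  rintro ⟨U, hU, S, hSA, hcard, hle, hcov⟩
  set T : Set I := {i | (h.isFlat_fiber i).toAffineSubspace ∈ S}
  have hpre : col ⁻¹' T = U := by
    ext x
    refine ⟨fun hx => hle _ hx rfl, fun hx => ?_⟩
    obtain ⟨_, ⟨hs, hxs⟩, -⟩ := hcov x hx
    obtain ⟨i, rfl⟩ := hSA hs
    obtain rfl : col x = i := hxs
    exact hs
  rcases hirr T (hpre ▸ isFlat_affineSubspace U) with hsub | huniv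
  · obtain ⟨s, hs, t, ht, hst⟩ := (Set.one_lt_ncard_iff_nontrivial_and_finite.1 hcard).1
    obtain ⟨i, rfl⟩ := hSA hs
    obtain ⟨j, rfl⟩ := hSA ht
    obtain rfl : i = j := hsub hs ht
    exact hst rfl
  · refine hU (SetLike.coe_injective ?_)
    rw [← hpre, huniv, Set.preimage_univ, AffineSubspace.top_coe]

lemma ncard_cells (h : IsTightColoring col) : h.cells.ncard = Nat.card I := by
  have hinj : Function.Injective fun i => (h.isFlat_fiber i).toAffineSubspace := by
    intro i j hij
    obtain ⟨x, rfl⟩ := h.surjective i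
    have hx : x ∈ (h.isFlat_fiber j).toAffineSubspace := hij.le rfl
    exact hx
  rw [cells, ← Set.image_univ, Set.ncard_image_of_injective _ hinj, Set.ncard_univ]

end IsTightColoring

lemma exists_avsp_of_coloring {V I : Type*} [AddCommGroup V] [Module (ZMod 2) V]
    [Module.Finite (ZMod 2) V] [Nontrivial I] {col : V → I} (htight : IsTightColoring col)
    (hirr : IsIrreducibleColoring col) {m : ℕ} (hm : Module.finrank (ZMod 2) V = m) :
    ∃ A : Set (AffineSubspace (ZMod 2) (Fin m → ZMod 2)),
      IsAVSP A ∧ IsTight A ∧ ¬ IsReducible A ∧ A.ncard = Nat.card I := by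
  let e := (Module.finBasisOfFinrankEq (ZMod 2) V hm).equivFun.symm.toAddEquiv
  have h := htight.comp_equiv e
  exact ⟨h.cells, h.isAVSP_cells, h.isTight_cells,
    h.not_isReducible_cells (hirr.comp_equiv e), h.ncard_cells⟩

/-- Two parts whose union consists of three parallel flats: part `s` is `a ∪ (a + p)` and part `t`
is `a + q`. Over `F_2`, membership of `x` in `a + r` is written `x + r ∈ a`. -/
structure IsTriangle {V I : Type*} [Add V] (col : V → I) (a : Set V) (p q : V) (s t : I) :
    Prop where
  nonempty : a.Nonempty
  isFlat : IsFlat a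
  add_notMem : ∀ x ∈ a, x + p ∉ a
  eq_left_iff : ∀ x, col x = s ↔ x ∈ a ∨ x + p ∈ a
  eq_right_iff : ∀ x, col x = t ↔ x + q ∈ a
  ne : s ≠ t

namespace IsTriangle

variable {V I : Type*} {col : V → I} {a : Set V} {p q x : V} {s t : I}

lemma col_eq_left [Add V] (h : IsTriangle col a p q s t) (hx : x ∈ a) : col x = s :=
  (h.eq_left_iff x).2 (.inl hx)

variable [AddCommGroup V] [Module (ZMod 2) V]

lemma col_add_eq_left (h : IsTriangle col a p q s t) (hx : x ∈ a) : col (x + p) = s :=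
  (h.eq_left_iff _).2 (.inr (by rwa [zmodTwo_add_add_cancel_right]))

lemma col_add_eq_right (h : IsTriangle col a p q s t) (hx : x ∈ a) : col (x + q) = t :=
  (h.eq_right_iff _).2 (by rwa [zmodTwo_add_add_cancel_right])

lemma col_add_add_ne (h : IsTriangle col a p q s t) (hx : x ∈ a) :
    col (x + p + q) ≠ s ∧ col (x + p + q) ≠ t := by
  refine ⟨fun hs => ?_, fun ht => ?_⟩
  · rcases (h.eq_left_iff _).1 hs with hmem | hmem
    · exact h.ne ((h.col_add_eq_left hx).symm.trans ((h.eq_right_iff _).2 hmem))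
    · rw [add_right_comm, zmodTwo_add_add_cancel_right] at hmem
      exact h.ne ((h.col_eq_left hx).symm.trans ((h.eq_right_iff x).2 hmem))
  · rw [h.eq_right_iff, zmodTwo_add_add_cancel_right] at ht
    exact h.add_notMem x hx ht

end IsTriangle

/-- The coloring of `V × F_2` given by `f` on the layer `V × {0}` and by `g` on `V × {1}`. -/
def stack {V J : Type*} (f g : V → J) (x : V × ZMod 2) : J :=
  if x.2 = 0 then f x.1 else g x.1

section Stack

variable {V I J : Type*} {f g : V → J}

@[simp]
lemma stack_zero (x : V) : stack f g (x, 0) = f x := if_pos rfl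

@[simp]
lemma stack_one (x : V) : stack f g (x, 1) = g x := if_neg one_ne_zero

lemma isTightColoring_stack [AddZeroClass V] {col : V → I} {ι : I → J} {s : I}
    (h : IsTightColoring col) (hι : Function.Injective ι) (hs : ∀ x, g x ≠ ι s)
    (hsurj : ∀ j, j ∈ Set.range ι ∨ j ∈ Set.range g)
    (hflat : ∀ j, IsFlat (stack (ι ∘ col) g ⁻¹' {j})) : IsTightColoring (stack (ι ∘ col) g) where
  surjective j := by
    rcases hsurj j with ⟨i, rfl⟩ | ⟨x, rfl⟩
    · obtain ⟨x, rfl⟩ := h.surjective i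
      exact ⟨(x, 0), stack_zero x⟩
    · exact ⟨(x, 1), stack_one x⟩
  isFlat_fiber := hflat
  eq_zero_of_forall := by
    rintro ⟨v, i⟩ hv
    obtain ⟨y, hy⟩ := h.surjective s
    obtain rfl | rfl := zmodTwo_eq_zero_or_one i
    · have hv₀ : v = 0 := h.eq_zero_of_forall v fun x => hι (by simpa using hv (x, 0))
      rw [hv₀]
      rfl
    · exact absurd (by simpa [hy] using hv (y, 0)) (hs (v + y))

lemma stack_preimage_singleton (j : J) :
    stack f g ⁻¹' {j} = (f ⁻¹' {j}) ×ˢ {0} ∪ (g ⁻¹' {j}) ×ˢ {1} := by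
  ext ⟨x, i⟩
  obtain rfl | rfl := zmodTwo_eq_zero_or_one i <;> simp

lemma isFlat_stack_fiber_of_forall_top_ne [Add V] {j : J} (hf : IsFlat (f ⁻¹' {j}))
    (hg : ∀ x, g x ≠ j) : IsFlat (stack f g ⁻¹' {j}) := by
  have hempty : g ⁻¹' {j} = ∅ := Set.eq_empty_of_forall_notMem hg
  rw [stack_preimage_singleton, hempty, Set.empty_prod, Set.union_empty]
  exact hf.prod (.singleton 0)

lemma isFlat_stack_fiber_of_forall_bottom_ne [Add V] {j : J} (hf : ∀ x, f x ≠ j)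
    (hg : IsFlat (g ⁻¹' {j})) : IsFlat (stack f g ⁻¹' {j}) := by
  have hempty : f ⁻¹' {j} = ∅ := Set.eq_empty_of_forall_notMem hf
  rw [stack_preimage_singleton, hempty, Set.empty_prod, Set.empty_union]
  exact hg.prod (.singleton 1)

lemma IsIrreducibleColoringRel.subsingleton_or_eq_univ_of_isFlat_stack [AddZeroClass V]
    {col : V → I} {s t : I} {ι : I → J} {S : Set J} (hrel : IsIrreducibleColoringRel col s t)
    (hS : IsFlat (stack (ι ∘ col) g ⁻¹' S)) {c : I} (hc : ι c ∈ S) (hcs : c ≠ s)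
    (hst : ι s ∈ S ↔ ι t ∈ S) (hrange : ∀ j ∉ Set.range ι, (ι s ∈ S ↔ j ∈ S)) :
    S.Subsingleton ∨ S = Set.univ := by
  have hbottom : IsFlat (col ⁻¹' (ι ⁻¹' S)) := by
    have hpre : col ⁻¹' (ι ⁻¹' S) =
        AddMonoidHom.inl V (ZMod 2) ⁻¹' (stack (ι ∘ col) g ⁻¹' S) := by
      ext x
      simp
    rw [hpre]
    exact hS.preimage _
  rcases hrel _ hbottom hst with hsub | huniv
  · have hs : ι s ∉ S := fun hs => hcs (hsub hc hs)
    have hsingle : ∀ j ∈ S, j = ι c := fun j hj => by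
      obtain ⟨d, rfl⟩ : j ∈ Set.range ι := by_contra fun hj' => hs ((hrange j hj').2 hj)
      exact congrArg ι (hsub hj hc)
    exact .inl fun j hj k hk => (hsingle j hj).trans (hsingle k hk).symm
  · have hall : ∀ d, ι d ∈ S := Set.eq_univ_iff_forall.1 huniv
    refine .inr (Set.eq_univ_iff_forall.2 fun j => ?_)
    by_cases hj : j ∈ Set.range ι
    · obtain ⟨d, rfl⟩ := hj
      exact hall d
    · exact (hrange j hj).1 (hall s)

variable [AddCommGroup V] [Module (ZMod 2) V]

lemma isFlat_stack_fiber_of_translate {j : J} (hf : IsFlat (f ⁻¹' {j})) (r : V)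
    (hg : ∀ x, g x = j ↔ f (x + r) = j) : IsFlat (stack f g ⁻¹' {j}) := by
  have hfiber : stack f g ⁻¹' {j} =
      {x | x ∈ (f ⁻¹' {j}) ×ˢ {0} ∨ x + (r, 1) ∈ (f ⁻¹' {j}) ×ˢ ({0} : Set (ZMod 2))} := by
    ext ⟨x, i⟩
    obtain rfl | rfl := zmodTwo_eq_zero_or_one i <;> simp [hg, CharTwo.add_self_eq_zero]
  rw [hfiber]
  exact (hf.prod (.singleton 0)).union_translate (r, 1)

variable {S : Set J}

lemma mem_iff_mem_of_isFlat_stack (hS : IsFlat (stack f g ⁻¹' S)) {y : V} (hf : f y ∈ S)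
    (hg : g y ∈ S) (x : V) : f x ∈ S ↔ g x ∈ S := by
  have hy₀ : (y, 0) ∈ stack f g ⁻¹' S := by simpa using hf
  have hy₁ : (y, 1) ∈ stack f g ⁻¹' S := by simpa using hg
  refine ⟨fun hx => ?_, fun hx => ?_⟩
  · simpa [zmodTwo_add_add_cancel_right] using hS (x, 0) (by simpa using hx) _ hy₀ _ hy₁
  · simpa [zmodTwo_add_add_cancel_right, CharTwo.add_self_eq_zero] using
      hS (x, 1) (by simpa using hx) _ hy₀ _ hy₁

variable {col : V → I} {a : Set V} {p q : V} {s t : I} {ι : I → J}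

lemma IsTriangle.exists_mem_of_isFlat_stack (h : IsTriangle col a p q s t)
    (hg : ∀ x, col x ≠ s → col x ≠ t → g x = ι (col x))
    (hS : IsFlat (stack (ι ∘ col) g ⁻¹' S)) {x : V} (hx : x ∈ a) {i j k : ZMod 2}
    (hi : stack (ι ∘ col) g (x, i) ∈ S) (hj : stack (ι ∘ col) g (x + p, j) ∈ S)
    (hk : stack (ι ∘ col) g (x + q, k) ∈ S) : ∃ c, c ≠ s ∧ c ≠ t ∧ ι c ∈ S := by
  obtain ⟨hs, ht⟩ := h.col_add_add_ne hx
  have hsum : x + (x + p) + (x + q) = x + p + q := by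
    rw [← add_assoc x x, ZModModule.add_self, zero_add]
    abel
  have hmem : stack (ι ∘ col) g (x + p + q, i + j + k) ∈ S := hsum ▸ hS _ hi _ hj _ hk
  refine ⟨col (x + p + q), hs, ht, ?_⟩
  obtain hl | hl := zmodTwo_eq_zero_or_one (i + j + k) <;> simpa [hl, hg _ hs ht] using hmem

end Stack

section Rotate

variable {V I : Type*}

open Classical in
/-- The top layer of `rotate`. -/
noncomputable def rotateTop [Add V] (col : V → I) (a : Set V) (p q : V) (t : I) (x : V) :
    Option I :=
  if x ∈ a then some t else if x + p ∈ a ∨ x + q ∈ a then none else some (col x)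

/-- The partition of `V × F_2` in which the columns over the triangle `a`, `b = a + p`, `c = a + q`
are cut into `(a ∪ b) × {0}` (color `s`), `c × {0} ∪ a × {1}` (color `t`) and `(b ∪ c) × {1}` (the
new color), every other part being replaced by its product with `F_2`. -/
noncomputable def rotate [Add V] (col : V → I) (a : Set V) (p q : V) (t : I) :
    V × ZMod 2 → Option I :=
  stack (some ∘ col) (rotateTop col a p q t)

variable {col : V → I} {a : Set V} {p q : V} {s t : I}

namespace IsTriangle

section Top

variable [Add V]

lemma rotateTop_ne_left (h : IsTriangle col a p q s t) (x : V) :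
    rotateTop col a p q t x ≠ some s := by
  have := h.eq_left_iff x
  have := h.ne
  grind [rotateTop]

lemma rotateTop_eq_right_iff (h : IsTriangle col a p q s t) {x : V} :
    rotateTop col a p q t x = some t ↔ x ∈ a := by
  have := h.eq_right_iff x
  grind [rotateTop]

lemma rotateTop_eq_none_iff (h : IsTriangle col a p q s t) {x : V} :
    rotateTop col a p q t x = none ↔ x + p ∈ a ∨ x + q ∈ a := by
  have := h.add_notMem x
  have := h.eq_left_iff x
  have := h.eq_right_iff x
  have := h.ne
  grind [rotateTop]

lemma rotateTop_eq_some_iff (h : IsTriangle col a p q s t) {x : V} {i : I} (his : i ≠ s)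
    (hit : i ≠ t) : rotateTop col a p q t x = some i ↔ col x = i := by
  have := h.eq_left_iff x
  have := h.eq_right_iff x
  grind [rotateTop]

end Top

lemma isTriangle_rotate [AddZeroClass V] (h : IsTriangle col a p q s t) {a' : Set V}
    {p' q' : V} {s' t' : I} (h' : IsTriangle col a' p' q' s' t') (hss : s' ≠ s)
    (hst : s' ≠ t) (hts : t' ≠ s) (htt : t' ≠ t) :
    IsTriangle (rotate col a p q t) (a' ×ˢ Set.univ) (p', 0) (q', 0) (some s') (some t') where
  nonempty := h'.nonempty.prod Set.univ_nonempty
  isFlat := h'.isFlat.prod IsFlat.univ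
  add_notMem x hx := fun hxp => h'.add_notMem x.1 hx.1 hxp.1
  eq_left_iff := by
    rintro ⟨x, i⟩
    obtain rfl | rfl := zmodTwo_eq_zero_or_one i <;>
      simp [rotate, h.rotateTop_eq_some_iff hss hst, h'.eq_left_iff]
  eq_right_iff := by
    rintro ⟨x, i⟩
    obtain rfl | rfl := zmodTwo_eq_zero_or_one i <;>
      simp [rotate, h.rotateTop_eq_some_iff hts htt, h'.eq_right_iff]
  ne := by simpa using h'.ne

variable [AddCommGroup V] [Module (ZMod 2) V]

lemma rotateTop_add_left (h : IsTriangle col a p q s t) {x : V} (hx : x ∈ a) :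
    rotateTop col a p q t (x + p) = none :=
  h.rotateTop_eq_none_iff.2 (.inl (by rwa [zmodTwo_add_add_cancel_right]))

lemma rotateTop_add_right (h : IsTriangle col a p q s t) {x : V} (hx : x ∈ a) :
    rotateTop col a p q t (x + q) = none :=
  h.rotateTop_eq_none_iff.2 (.inr (by rwa [zmodTwo_add_add_cancel_right]))

lemma isFlat_rotate_fiber (h : IsTriangle col a p q s t) (hcol : IsTightColoring col)
    (j : Option I) : IsFlat (rotate col a p q t ⁻¹' {j}) := by
  have hbottom := hcol.isFlat_fiber_comp (Option.some_injective I)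
  rcases j with _ | i
  · refine isFlat_stack_fiber_of_forall_bottom_ne (by simp) ?_
    have hfiber : rotateTop col a p q t ⁻¹' {none} =
        {x | x ∈ {y | y + p ∈ a} ∨ x + (p + q) ∈ {y | y + p ∈ a}} := by
      ext x
      have hx : x + (p + q) + p = x + q := by
        rw [← add_assoc, add_right_comm, zmodTwo_add_add_cancel_right]
      simp [h.rotateTop_eq_none_iff, hx]
    rw [hfiber]
    exact (h.isFlat.translate p).union_translate (p + q)
  by_cases his : i = s
  · subst his
    exact isFlat_stack_fiber_of_forall_top_ne (hbottom i) h.rotateTop_ne_left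
  by_cases hit : i = t
  · subst hit
    refine isFlat_stack_fiber_of_translate (hbottom i) q fun x => ?_
    simp [h.rotateTop_eq_right_iff, h.eq_right_iff, zmodTwo_add_add_cancel_right]
  · refine isFlat_stack_fiber_of_translate (hbottom i) 0 fun x => ?_
    simp [h.rotateTop_eq_some_iff his hit]

lemma isTightColoring_rotate (h : IsTriangle col a p q s t) (hcol : IsTightColoring col) :
    IsTightColoring (rotate col a p q t) := by
  refine isTightColoring_stack hcol (Option.some_injective I) h.rotateTop_ne_left ?_
    (h.isFlat_rotate_fiber hcol)
  rintro (_ | i)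
  · obtain ⟨x, hx⟩ := h.nonempty
    exact .inr ⟨x + p, h.rotateTop_add_left hx⟩
  · exact .inl ⟨i, rfl⟩

-- Each two of the three new parts meet all three columns over `a`, `b` and `c`, hence span a point
-- in the column over a fourth flat.
lemma subsingleton_of_isFlat_rotate (h : IsTriangle col a p q s t) {S : Set (Option I)}
    (hS : IsFlat (rotate col a p q t ⁻¹' S)) (hother : ∀ c, some c ∈ S → c = s ∨ c = t) :
    S.Subsingleton := by
  obtain ⟨x, hx⟩ := h.nonempty
  have bot_a := h.col_eq_left hx
  have bot_b := h.col_add_eq_left hx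
  have bot_c := h.col_add_eq_right hx
  have top_a := h.rotateTop_eq_right_iff.2 hx
  have top_b := h.rotateTop_add_left hx
  have top_c := h.rotateTop_add_right hx
  have hcolumns {i j k : ZMod 2} (hi : rotate col a p q t (x, i) ∈ S)
      (hj : rotate col a p q t (x + p, j) ∈ S) (hk : rotate col a p q t (x + q, k) ∈ S) :
      False := by
    obtain ⟨c, hcs, hct, hc⟩ := h.exists_mem_of_isFlat_stack
      (fun y hys hyt => (h.rotateTop_eq_some_iff hys hyt).2 rfl) hS hx hi hj hk
    exact (hother c hc).elim hcs hct
  have hst : some s ∈ S → some t ∉ S := fun hs ht =>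
    hcolumns (i := 0) (j := 0) (k := 0) (by simpa [rotate, bot_a]) (by simpa [rotate, bot_b])
      (by simpa [rotate, bot_c])
  have hsn : some s ∈ S → none ∉ S := fun hs hn =>
    hcolumns (i := 0) (j := 0) (k := 1) (by simpa [rotate, bot_a]) (by simpa [rotate, bot_b])
      (by simpa [rotate, top_c])
  have htn : some t ∈ S → none ∉ S := fun ht hn =>
    hcolumns (i := 1) (j := 1) (k := 1) (by simpa [rotate, top_a]) (by simpa [rotate, top_b])
      (by simpa [rotate, top_c])
  rintro (_ | c) hc (_ | d) hd <;> grind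

lemma isIrreducibleColoring_rotate (h : IsTriangle col a p q s t) (hcol : IsTightColoring col)
    (hrel : IsIrreducibleColoringRel col s t) : IsIrreducibleColoring (rotate col a p q t) := by
  intro S hS
  by_cases hother : ∀ c, some c ∈ S → c = s ∨ c = t
  · exact .inl (h.subsingleton_of_isFlat_rotate hS hother)
  · push Not at hother
    obtain ⟨c, hc, hcs, hct⟩ := hother
    obtain ⟨y, rfl⟩ := hcol.surjective c
    obtain ⟨x, hx⟩ := h.nonempty
    have hcolumn := mem_iff_mem_of_isFlat_stack hS hc
      (by rwa [(h.rotateTop_eq_some_iff hcs hct).2 rfl])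
    refine hrel.subsingleton_or_eq_univ_of_isFlat_stack hS hc hcs ?_ ?_
    · simpa [h.col_eq_left hx, h.rotateTop_eq_right_iff.2 hx] using hcolumn x
    · rintro (_ | i) hi
      · simpa [h.col_add_eq_left hx, h.rotateTop_add_left hx] using hcolumn (x + p)
      · exact absurd ⟨i, rfl⟩ hi

end IsTriangle

end Rotate

section Split

variable {V I : Type*}

open Classical in
/-- The top layer of `split`. -/
noncomputable def splitTop [Add V] (col : V → I) (a : Set V) (p : V) (x : V) : I ⊕ Bool :=
  if x ∈ a then .inr false else if x + p ∈ a then .inr true else .inl (col x)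

/-- The partition of `V × F_2` in which the part `a ∪ b`, `b = a + p`, is replaced by
`(a ∪ b) × {0}` and the two new parts `a × {1}` and `b × {1}`, and every other part by its product
with `F_2`. -/
noncomputable def split [Add V] (col : V → I) (a : Set V) (p : V) : V × ZMod 2 → I ⊕ Bool :=
  stack (Sum.inl ∘ col) (splitTop col a p)

lemma splitTop_eq_inr_false_iff [Add V] {col : V → I} {a : Set V} {p x : V} :
    splitTop col a p x = .inr false ↔ x ∈ a := by
  grind [splitTop]

variable {col : V → I} {a : Set V} {p q : V} {s t : I}

namespace IsTriangle

section Top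

variable [Add V]

lemma splitTop_eq_inr_true_iff (h : IsTriangle col a p q s t) {x : V} :
    splitTop col a p x = .inr true ↔ x + p ∈ a := by
  have := h.add_notMem x
  grind [splitTop]

lemma splitTop_ne_left (h : IsTriangle col a p q s t) (x : V) : splitTop col a p x ≠ .inl s := by
  have := h.eq_left_iff x
  grind [splitTop]

lemma splitTop_eq_inl_iff (h : IsTriangle col a p q s t) {x : V} {i : I} (his : i ≠ s) :
    splitTop col a p x = .inl i ↔ col x = i := by
  have := h.eq_left_iff x
  grind [splitTop]

end Top

lemma isTriangle_split_left [AddZeroClass V] (h : IsTriangle col a p q s t) :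
    IsTriangle (split col a p) (a ×ˢ {0}) (p, 0) (0, 1) (.inl s) (.inr false) where
  nonempty := h.nonempty.prod (Set.singleton_nonempty 0)
  isFlat := h.isFlat.prod (.singleton 0)
  add_notMem x hx := fun hxp => h.add_notMem x.1 hx.1 hxp.1
  eq_left_iff := by
    rintro ⟨x, i⟩
    obtain rfl | rfl := zmodTwo_eq_zero_or_one i <;>
      simp [split, h.splitTop_ne_left, h.eq_left_iff]
  eq_right_iff := by
    rintro ⟨x, i⟩
    obtain rfl | rfl := zmodTwo_eq_zero_or_one i <;>
      simp [split, splitTop_eq_inr_false_iff, CharTwo.add_self_eq_zero]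
  ne := by simp

variable [AddCommGroup V] [Module (ZMod 2) V]

lemma splitTop_add_left (h : IsTriangle col a p q s t) {x : V} (hx : x ∈ a) :
    splitTop col a p (x + p) = .inr true :=
  h.splitTop_eq_inr_true_iff.2 (by rwa [zmodTwo_add_add_cancel_right])

lemma isFlat_split_fiber (h : IsTriangle col a p q s t) (hcol : IsTightColoring col)
    (j : I ⊕ Bool) : IsFlat (split col a p ⁻¹' {j}) := by
  have hbottom := hcol.isFlat_fiber_comp (Sum.inl_injective (β := Bool))
  rcases j with i | _ | _
  · by_cases his : i = s
    · subst his
      exact isFlat_stack_fiber_of_forall_top_ne (hbottom i) h.splitTop_ne_left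
    · refine isFlat_stack_fiber_of_translate (hbottom i) 0 fun x => ?_
      simp [h.splitTop_eq_inl_iff his]
  · refine isFlat_stack_fiber_of_forall_bottom_ne (by simp) ?_
    simpa only [Set.preimage, Set.mem_singleton_iff, splitTop_eq_inr_false_iff,
      Set.ofPred_mem_eq] using h.isFlat
  · refine isFlat_stack_fiber_of_forall_bottom_ne (by simp) ?_
    simpa only [Set.preimage, Set.mem_singleton_iff, h.splitTop_eq_inr_true_iff] using
      h.isFlat.translate p

lemma isTightColoring_split (h : IsTriangle col a p q s t) (hcol : IsTightColoring col) :
    IsTightColoring (split col a p) := by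
  refine isTightColoring_stack hcol Sum.inl_injective h.splitTop_ne_left ?_
    (h.isFlat_split_fiber hcol)
  obtain ⟨x, hx⟩ := h.nonempty
  rintro (i | _ | _)
  · exact .inl ⟨i, rfl⟩
  · exact .inr ⟨x, splitTop_eq_inr_false_iff.2 hx⟩
  · exact .inr ⟨x + p, h.splitTop_add_left hx⟩

lemma subsingleton_of_isFlat_split (h : IsTriangle col a p q s t) {S : Set (I ⊕ Bool)}
    (hS : IsFlat (split col a p ⁻¹' S)) (hpair : .inl t ∈ S ↔ .inr true ∈ S)
    (hother : ∀ c, .inl c ∈ S → c = s ∨ c = t) : S.Subsingleton := by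
  obtain ⟨x, hx⟩ := h.nonempty
  have bot_a := h.col_eq_left hx
  have bot_b := h.col_add_eq_left hx
  have bot_c := h.col_add_eq_right hx
  have top_a : splitTop col a p x = .inr false := splitTop_eq_inr_false_iff.2 hx
  have top_b := h.splitTop_add_left hx
  have top_c : splitTop col a p (x + q) = .inl t := (h.splitTop_eq_inl_iff h.ne.symm).2 bot_c
  have hcolumn {y : V} (hy : .inl (col y) ∈ S) (hy' : splitTop col a p y ∈ S) :
      .inl s ∈ S ↔ .inr true ∈ S := by
    simpa [bot_b, top_b] using mem_iff_mem_of_isFlat_stack hS hy hy' (x + p)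
  have ht : .inl t ∉ S := fun ht => by
    have hs : .inl s ∈ S := (hcolumn (bot_c ▸ ht) (top_c ▸ ht)).2 (hpair.1 ht)
    obtain ⟨c, hcs, hct, hc⟩ := h.exists_mem_of_isFlat_stack (i := 0) (j := 0) (k := 0)
      (fun y hys _ => (h.splitTop_eq_inl_iff hys).2 rfl) hS hx (by simpa [bot_a])
      (by simpa [bot_b]) (by simpa [bot_c])
    exact (hother c hc).elim hcs hct
  have hb : .inr true ∉ S := fun hb => ht (hpair.2 hb)
  have hsa : .inl s ∈ S → .inr false ∉ S := fun hs ha =>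
    hb ((hcolumn (bot_a ▸ hs) (top_a ▸ ha)).1 hs)
  rintro (c | _ | _) hc (d | _ | _) hd <;> grind

lemma isIrreducibleColoringRel_split (h : IsTriangle col a p q s t) (hcol : IsTightColoring col)
    (hrel : IsIrreducibleColoringRel col s t) :
    IsIrreducibleColoringRel (split col a p) (.inl t) (.inr true) := by
  intro S hS hpair
  by_cases hother : ∀ c, .inl c ∈ S → c = s ∨ c = t
  · exact .inl (h.subsingleton_of_isFlat_split hS hpair hother)
  · push Not at hother
    obtain ⟨c, hc, hcs, hct⟩ := hother
    obtain ⟨y, rfl⟩ := hcol.surjective c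
    obtain ⟨x, hx⟩ := h.nonempty
    have hcolumn := mem_iff_mem_of_isFlat_stack hS hc (by rwa [(h.splitTop_eq_inl_iff hcs).2 rfl])
    have hsa : .inl s ∈ S ↔ .inr false ∈ S := by
      simpa [h.col_eq_left hx, splitTop_eq_inr_false_iff.2 hx] using hcolumn x
    have hsb : .inl s ∈ S ↔ .inr true ∈ S := by
      simpa [h.col_add_eq_left hx, h.splitTop_add_left hx] using hcolumn (x + p)
    refine hrel.subsingleton_or_eq_univ_of_isFlat_stack hS hc hcs (hsb.trans hpair.symm) ?_
    rintro (i | _ | _) hi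
    · exact absurd ⟨i, rfl⟩ hi
    · exact hsa
    · exact hsb

lemma isTriangle_split_right (h : IsTriangle col a p q s t) :
    IsTriangle (split col a p) ({x | x + q ∈ a} ×ˢ {0}) (0, 1) (p + q, 1) (.inl t)
      (.inr true) where
  nonempty := by
    obtain ⟨x, hx⟩ := h.nonempty
    exact ⟨(x + q, 0), by simpa [zmodTwo_add_add_cancel_right]⟩
  isFlat := (h.isFlat.translate q).prod (.singleton 0)
  add_notMem := by
    rintro ⟨x, i⟩ ⟨-, rfl⟩
    simp
  eq_left_iff := by
    rintro ⟨x, i⟩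
    obtain rfl | rfl := zmodTwo_eq_zero_or_one i <;>
      simp [split, h.splitTop_eq_inl_iff h.ne.symm, h.eq_right_iff, CharTwo.add_self_eq_zero]
  eq_right_iff := by
    rintro ⟨x, i⟩
    obtain rfl | rfl := zmodTwo_eq_zero_or_one i <;>
      simp [split, h.splitTop_eq_inr_true_iff, CharTwo.add_self_eq_zero, ← add_assoc,
        zmodTwo_add_add_cancel_right]
  ne := by simp

end IsTriangle

end Split

section Plane

/-- The partition of `F_2^2` into one line and two points. -/
def planeColoring (x : ZMod 2 × ZMod 2) : Fin 3 :=
  if x.1 = 0 then 0 else if x.2 = 0 then 1 else 2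

lemma isTightColoring_planeColoring : IsTightColoring planeColoring where
  surjective := by unfold Function.Surjective; decide
  isFlat_fiber := by simp only [IsFlat, Set.mem_preimage, Set.mem_singleton_iff]; decide
  eq_zero_of_forall := by decide

lemma isTriangle_planeColoring : IsTriangle planeColoring {0} (0, 1) (1, 0) 0 1 where
  nonempty := Set.singleton_nonempty 0
  isFlat := .singleton 0
  add_notMem := by simp
  eq_left_iff := by simp only [Set.mem_singleton_iff]; decide
  eq_right_iff := by simp only [Set.mem_singleton_iff]; decide
  ne := by decide

lemma isIrreducibleColoringRel_planeColoring : IsIrreducibleColoringRel planeColoring 0 1 := by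
  intro S hS hpair
  by_cases h₀ : 0 ∈ S
  · have h₂ : 2 ∈ S := hS (0, 0) h₀ (0, 1) h₀ (1, 0) (hpair.1 h₀)
    refine .inr (Set.eq_univ_iff_forall.2 fun i => ?_)
    fin_cases i
    exacts [h₀, hpair.1 h₀, h₂]
  · have hsingle : S ⊆ {2} := fun i hi => by
      fin_cases i
      exacts [absurd hi h₀, absurd (hpair.2 hi) h₀, rfl]
    exact .inl (Set.subsingleton_singleton.anti hsingle)

end Plane

/-- Existence of a tight partition of an `m`-dimensional space over `F_2` into `N` flats, two of
which form a triangle modulo which the partition is irreducible. -/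
def ExistsTriangleColoring (m N : ℕ) : Prop :=
  ∃ (V I : Type) (_ : AddCommGroup V) (_ : Module (ZMod 2) V) (_ : Module.Finite (ZMod 2) V)
    (_ : Finite I) (col : V → I) (a : Set V) (p q : V) (s t : I),
    Module.finrank (ZMod 2) V = m ∧ Nat.card I = N ∧ IsTightColoring col ∧
      IsTriangle col a p q s t ∧ IsIrreducibleColoringRel col s t

namespace ExistsTriangleColoring

lemma plane : ExistsTriangleColoring 2 3 :=
  ⟨ZMod 2 × ZMod 2, Fin 3, inferInstance, inferInstance, inferInstance, inferInstance,
    planeColoring, {0}, (0, 1), (1, 0), 0, 1, by simp, by simp, isTightColoring_planeColoring,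
    isTriangle_planeColoring, isIrreducibleColoringRel_planeColoring⟩

variable {m N : ℕ}

lemma exists_avsp_add_one (h : ExistsTriangleColoring m N) :
    ∃ A : Set (AffineSubspace (ZMod 2) (Fin (m + 1) → ZMod 2)),
      IsAVSP A ∧ IsTight A ∧ ¬ IsReducible A ∧ A.ncard = N + 1 := by
  obtain ⟨V, I, _, _, _, _, col, a, p, q, s, t, rfl, rfl, hcol, htri, hrel⟩ := h
  have : Nonempty I := ⟨s⟩
  rw [← Finite.card_option]
  exact exists_avsp_of_coloring (htri.isTightColoring_rotate hcol)
    (htri.isIrreducibleColoring_rotate hcol hrel) (by simp)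

lemma add_one (h : ExistsTriangleColoring m N) : ExistsTriangleColoring (m + 1) (N + 2) := by
  obtain ⟨V, I, _, _, _, _, col, a, p, q, s, t, rfl, rfl, hcol, htri, hrel⟩ := h
  exact ⟨V × ZMod 2, I ⊕ Bool, inferInstance, inferInstance, inferInstance, inferInstance,
    split col a p, _, _, _, _, _, by simp, by simp [Nat.card_sum], htri.isTightColoring_split hcol,
    htri.isTriangle_split_right, htri.isIrreducibleColoringRel_split hcol hrel⟩

lemma add_two (h : ExistsTriangleColoring m N) : ExistsTriangleColoring (m + 2) (N + 3) := by
  obtain ⟨V, I, _, _, _, _, col, a, p, q, s, t, rfl, rfl, hcol, htri, hrel⟩ := h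
  have hright := htri.isTriangle_split_right
  have hirr := hright.isIrreducibleColoring_rotate (htri.isTightColoring_split hcol)
    (htri.isIrreducibleColoringRel_split hcol hrel)
  exact ⟨(V × ZMod 2) × ZMod 2, Option (I ⊕ Bool), inferInstance, inferInstance, inferInstance,
    inferInstance, rotate (split col a p) _ _ _ _, _, _, _, _, _, by simp,
    by simp [Finite.card_option, Nat.card_sum],
    hright.isTightColoring_rotate (htri.isTightColoring_split hcol),
    hright.isTriangle_rotate htri.isTriangle_split_left (by simpa using htri.ne) (by simp)
      (by simp) (by simp), hirr.rel _ _⟩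

end ExistsTriangleColoring

lemma existsTriangleColoring (k : ℕ) : ExistsTriangleColoring (2 * k + 2) (3 * k + 3) := by
  induction k with
  | zero => exact .plane
  | succ k ih => exact ih.add_two

theorem stmt17 (n : ℕ) (hn : 4 ≤ n) :
    ∃ A : Set (AffineSubspace (ZMod 2) (Fin (n - 1) → ZMod 2)),
      IsAVSP A ∧ IsTight A ∧ ¬ IsReducible A ∧ A.ncard = (3 * n - 3) / 2 := by
  obtain ⟨k, rfl | rfl⟩ : ∃ k, n = 2 * k + 4 ∨ n = 2 * k + 5 := ⟨(n - 4) / 2, by omega⟩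
  · rw [show (3 * (2 * k + 4) - 3) / 2 = 3 * k + 3 + 1 by omega]
    exact (existsTriangleColoring k).exists_avsp_add_one
  · rw [show (3 * (2 * k + 5) - 3) / 2 = 3 * k + 3 + 2 + 1 by omega]
    exact (existsTriangleColoring k).add_one.exists_avsp_add_one
end
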